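/- There exist absolute constants c > 0 and C > 0 with the following property. Let D be a fundamental discriminant with |D| ≥ 16 and let Y be a real number with 3 ≤ Y < |D|. Let V be the set of quadratic Dirichlet characters χ modulo |D| such that L(s,χ) has no real zero β with β > 1 − c/log |D|. Then ∑_{χ ∈ V} (log L(1,χ))² ≤ C · #V · [ (log log |D|)·(log(ω_Y(D) + 2) + log log Y) + (log log |D|)²/2^{ω_Y(D)} ]. -/

import Mathlib

open Filter Topology NumberField

noncomputable section

/-- A fundamental discriminant: an integer `D ≠ 1` that is either squarefree and `≡ 1 (mod 4)`,
or `4m` with `m` squarefree and `m ≡ 2, 3 (mod 4)`. -/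
def IsFundDiscr (D : ℤ) : Prop :=
  D ≠ 1 ∧ ((Squarefree D ∧ D % 4 = 1) ∨
    ∃ m : ℤ, D = 4 * m ∧ Squarefree m ∧ (m % 4 = 2 ∨ m % 4 = 3))

/-- The number of fundamental discriminants `D` with `|D| ≤ X` satisfying `P`. -/
def fdCount (P : ℤ → Prop) (X : ℝ) : ℕ :=
  Nat.card {D : ℤ // IsFundDiscr D ∧ |(D : ℝ)| ≤ X ∧ P D}

/-- The property `P` holds for 100% of fundamental discriminants. -/
def FdDensityOne (P : ℤ → Prop) : Prop :=
  Tendsto (fun X : ℝ => (fdCount P X : ℝ) / (fdCount (fun _ => True) X : ℝ)) atTop (𝓝 1)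

/-- `ω_Y(D)`: the number of primes `p ≤ Y` dividing `D`. -/
def omegaY (Y : ℝ) (D : ℤ) : ℕ :=
  Nat.card {p : ℕ // p.Prime ∧ (p : ℝ) ≤ Y ∧ (p : ℤ) ∣ D}

/-!
Let `r(n) = ∑_{d ∣ n} χ(d) ≥ 0`. Multiplying its Mellin transform against `e^{-nu}` by `s - 1`
represents `(s - 1) Γ(s) ζ(s) L(s, χ)`, with the residue `L(1, χ)` isolated as an explicit term. By
positivity the remaining factor satisfies a Harnack inequality in `η` where `s = 1 + η / log q`, so
`L(s, χ)` is comparable to `L(1 + 1 / log q, χ)` up to `s = 1` unless `χ` has a real zero within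
`c / log q` of `1`, in which case it is smaller by a factor `η + c`. Feeding this into the
nonnegative sum `∑ (1 + χ₁(p)) (1 + χ₂(p)) p^{-s}` shows that at most one `χ` is exceptional. For
all other quadratic characters `log L(1, χ) = ∑ χ(p) p^{-1 - 1 / log q} + O(1)`.

The second moment of these prime sums over the characters modulo `q` opens up, by orthogonality, to
`∑ p^{-1 - 1 / log q}` times their first moment modulo any divisor `P` of `q`. Take `P` to be the
product of the odd primes up to `Y` dividing `q`. At most two of the at least `2^{ω - 1}` characters
modulo `P` are principal or exceptional, and for these the sum is `O(log log q)`; for the others it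
is comparable to the sum at the scale `1 / log P`, hence `O(log log P)`.
-/

namespace QuadraticMoment

open MeasureTheory Set

/-! ### Lambert series of sequences with bounded partial sums -/

/-- The kernel `1/y - 1/(exp y - 1)`, which compares the Lambert series of a sequence with its
series `∑ a n / n`. -/
def lambertKernel (y : ℝ) : ℝ := 1 / y - 1 / (Real.exp y - 1)

lemma exp_sub_one_pos {y : ℝ} (hy : 0 < y) : 0 < Real.exp y - 1 :=
  sub_pos.2 (Real.one_lt_exp_iff.2 hy)

lemma lambertKernel_nonneg {y : ℝ} (hy : 0 < y) : 0 ≤ lambertKernel y :=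
  sub_nonneg.2 (one_div_le_one_div_of_le hy (by linarith [Real.add_one_le_exp y]))

lemma lambertKernel_le_one {y : ℝ} (hy : 0 < y) : lambertKernel y ≤ 1 := by
  have hpos := exp_sub_one_pos hy
  have key : (1 - y) * Real.exp y ≤ 1 :=
    calc (1 - y) * Real.exp y ≤ Real.exp (-y) * Real.exp y := by
          gcongr
          linarith [Real.add_one_le_exp (-y)]
      _ = 1 := by rw [← Real.exp_add, neg_add_cancel, Real.exp_zero]
  rw [lambertKernel, sub_le_iff_le_add, div_le_iff₀ hy]
  have hsum : (1 + 1 / (Real.exp y - 1)) * y = y * Real.exp y / (Real.exp y - 1) := by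
    field_simp
    ring
  rw [hsum, le_div_iff₀ hpos]
  linarith

lemma sq_mul_exp_le {x : ℝ} (hx : 0 ≤ x) : x ^ 2 * Real.exp x ≤ (Real.exp x - 1) ^ 2 := by
  have hexp : Real.exp x = Real.exp (x / 2) ^ 2 := by
    rw [← Real.exp_nat_mul, Nat.cast_two, mul_div_cancel₀ x two_ne_zero]
  have hinv : Real.exp (-(x / 2)) * Real.exp (x / 2) = 1 := by
    rw [← Real.exp_add, neg_add_cancel, Real.exp_zero]
  have hsinh : x ≤ Real.exp (x / 2) - Real.exp (-(x / 2)) := by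
    have := Real.self_le_sinh_iff.2 (div_nonneg hx zero_le_two)
    rw [Real.sinh_eq] at this
    linarith
  have key : x * Real.exp (x / 2) ≤ Real.exp x - 1 := by
    have := mul_le_mul_of_nonneg_right hsinh (Real.exp_pos (x / 2)).le
    rw [sub_mul, hinv, ← sq, ← hexp] at this
    exact this
  calc x ^ 2 * Real.exp x = (x * Real.exp (x / 2)) ^ 2 := by rw [mul_pow, ← hexp]
    _ ≤ (Real.exp x - 1) ^ 2 := by gcongr

lemma hasDerivAt_lambertKernel {x : ℝ} (hx : 0 < x) :
    HasDerivAt lambertKernel (Real.exp x / (Real.exp x - 1) ^ 2 - 1 / x ^ 2) x := by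
  have hinv := (hasDerivAt_inv hx.ne').sub
    (((Real.hasDerivAt_exp x).sub_const 1).inv (exp_sub_one_pos hx).ne')
  refine (hinv.congr_of_eventuallyEq (.of_forall fun y ↦ ?_)).congr_deriv ?_
  · simp [lambertKernel]
  · ring

lemma lambertKernel_antitoneOn : AntitoneOn lambertKernel (Ioi 0) := by
  refine antitoneOn_of_deriv_nonpos (convex_Ioi 0)
    (fun x hx ↦ (hasDerivAt_lambertKernel hx).continuousAt.continuousWithinAt) ?_ ?_ <;>
    rw [interior_Ioi] <;> intro x hx
  · exact (hasDerivAt_lambertKernel hx).differentiableAt.differentiableWithinAt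
  · have hx0 : 0 < x := hx
    have hpos := exp_sub_one_pos hx0
    rw [(hasDerivAt_lambertKernel hx).deriv, sub_nonpos, div_le_div_iff₀ (by positivity)
      (by positivity)]
    linarith [sq_mul_exp_le hx0.le]

lemma abs_sum_mul_le_of_antitone {a g : ℕ → ℝ} {B : ℝ}
    (ha : ∀ N, |∑ i ∈ Finset.range N, a i| ≤ B) (hg : Antitone g) (hg0 : ∀ i, 0 ≤ g i) (N : ℕ) :
    |∑ i ∈ Finset.range N, a i * g i| ≤ B * g 0 := by
  have summation_by_parts : ∀ N, ∑ i ∈ Finset.range N, a i * g i =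
      (∑ i ∈ Finset.range N, a i) * g N +
        ∑ i ∈ Finset.range N, (∑ j ∈ Finset.range (i + 1), a j) * (g i - g (i + 1)) := by
    intro N
    induction N with
    | zero => simp
    | succ n ih =>
      simp only [Finset.sum_range_succ _ n, ih]
      ring
  have boundary : |(∑ i ∈ Finset.range N, a i) * g N| ≤ B * g N := by
    rw [abs_mul, abs_of_nonneg (hg0 N)]
    exact mul_le_mul_of_nonneg_right (ha N) (hg0 N)
  have interior : |∑ i ∈ Finset.range N, (∑ j ∈ Finset.range (i + 1), a j) * (g i - g (i + 1))| ≤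
      ∑ i ∈ Finset.range N, B * (g i - g (i + 1)) := by
    refine (Finset.abs_sum_le_sum_abs _ _).trans (Finset.sum_le_sum fun i _ ↦ ?_)
    have hstep : 0 ≤ g i - g (i + 1) := sub_nonneg.2 (hg i.le_succ)
    rw [abs_mul, abs_of_nonneg hstep]
    exact mul_le_mul_of_nonneg_right (ha _) hstep
  rw [← Finset.mul_sum, Finset.sum_range_sub'] at interior
  rw [summation_by_parts]
  linarith [abs_add_le ((∑ i ∈ Finset.range N, a i) * g N)
    (∑ i ∈ Finset.range N, (∑ j ∈ Finset.range (i + 1), a j) * (g i - g (i + 1)))]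

/-- The divisor sums `∑_{d ∣ n} a d`, i.e. the Dirichlet convolution `1 * a`; its value at `0`
is `0`. -/
def divisorSum (a : ℕ → ℝ) (n : ℕ) : ℝ := ∑ d ∈ n.divisors, a d

@[simp] lemma divisorSum_zero (a : ℕ → ℝ) : divisorSum a 0 = 0 := by simp [divisorSum]

section Lambert

variable {a : ℕ → ℝ} {z : ℝ}

lemma summable_prod_mul_pow_of_bounded {C : ℝ} (ha : ∀ n, |a n| ≤ C) (hz0 : 0 < z) (hz1 : z < 1) :
    Summable fun c : ℕ+ × ℕ+ ↦ a c.1 * z ^ (c.1 * c.2 : ℕ) := by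
  have hz : ‖z‖ < 1 := by rwa [Real.norm_of_nonneg hz0.le]
  refine .of_norm_bounded ((summable_prod_mul_pow (𝕜 := ℝ) 0 hz).mul_left C) fun c ↦ ?_
  rw [norm_mul, Real.norm_eq_abs, Real.norm_of_nonneg (pow_pos hz0 _).le, pow_zero, one_mul]
  exact mul_le_mul_of_nonneg_right (ha _) (pow_pos hz0 _).le

lemma hasSum_divisorSum_mul_pow {S : ℝ}
    (h : HasSum (fun c : ℕ+ × ℕ+ ↦ a c.1 * z ^ (c.1 * c.2 : ℕ)) S) :
    HasSum (fun n : ℕ ↦ divisorSum a n * z ^ n) S := by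
  have hfiber (n : ℕ+) : HasSum (fun x : (n : ℕ).divisorsAntidiagonal ↦
      a x.1.1 * z ^ (x.1.1 * x.1.2)) (divisorSum a n * z ^ (n : ℕ)) := by
    convert! hasSum_fintype _ using 1
    rw [Finset.univ_eq_attach, Finset.sum_attach (n : ℕ).divisorsAntidiagonal
      (fun x ↦ a x.1 * z ^ (x.1 * x.2)), Nat.sum_divisorsAntidiagonal (fun x y ↦ a x * z ^ (x * y)),
      divisorSum, Finset.sum_mul]
    refine Finset.sum_congr rfl fun d hd ↦ ?_
    rw [Nat.mul_div_cancel' (Nat.dvd_of_mem_divisors hd)]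
  have hpnat := (sigmaAntidiagonalEquivProd.hasSum_iff.2 h).sigma hfiber
  refine (PNat.coe_injective.hasSum_iff fun n hn ↦ ?_).1 hpnat
  obtain rfl : n = 0 := by
    by_contra hn0
    exact hn ⟨⟨n, Nat.pos_of_ne_zero hn0⟩, rfl⟩
  simp

lemma hasSum_lambert {S : ℝ} (hz0 : 0 < z) (hz1 : z < 1)
    (h : HasSum (fun c : ℕ+ × ℕ+ ↦ a c.1 * z ^ (c.1 * c.2 : ℕ)) S) :
    HasSum (fun i : ℕ ↦ a (i + 1) * (z ^ (i + 1) / (1 - z ^ (i + 1)))) S := by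
  have hfiber (d : ℕ+) : HasSum (fun m : ℕ+ ↦ a d * z ^ (d * m : ℕ))
      (a d * (z ^ (d : ℕ) / (1 - z ^ (d : ℕ)))) := by
    have hgeom := (hasSum_geometric_of_lt_one (pow_nonneg hz0.le d)
      (pow_lt_one₀ hz0.le hz1 d.ne_zero)).mul_left (z ^ (d : ℕ))
    rw [← Equiv.pnatEquivNat.symm.hasSum_iff]
    convert! hgeom.mul_left (a d) using 1
    ext m
    simp only [Function.comp_apply, Equiv.pnatEquivNat_symm_apply, Nat.succPNat_coe,
      Nat.succ_eq_add_one]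
    ring
  have hpnat := h.prod_fiberwise hfiber
  rw [← Equiv.pnatEquivNat.symm.hasSum_iff] at hpnat
  exact hpnat

lemma hasSum_divisorSum_mul_exp {C u : ℝ} (ha : ∀ n, |a n| ≤ C) (hu : 0 < u) :
    ∃ S : ℝ, HasSum (fun n : ℕ ↦ divisorSum a n * Real.exp (-n * u)) S ∧
      HasSum (fun i : ℕ ↦ a (i + 1) * (1 / (Real.exp ((i + 1 : ℕ) * u) - 1))) S := by
  have hz0 : 0 < Real.exp (-u) := Real.exp_pos _
  have hz1 : Real.exp (-u) < 1 := Real.exp_lt_one_iff.2 (neg_lt_zero.2 hu)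
  have hpow (n : ℕ) : Real.exp (-u) ^ n = Real.exp (-n * u) := by
    rw [← Real.exp_nat_mul]
    ring_nf
  obtain ⟨S, hf⟩ := summable_prod_mul_pow_of_bounded ha hz0 hz1
  refine ⟨S, by simpa only [hpow] using hasSum_divisorSum_mul_pow hf, ?_⟩
  convert! hasSum_lambert hz0 hz1 hf using 3 with i
  have hpos : 0 < Real.exp ((i + 1 : ℕ) * u) - 1 := exp_sub_one_pos (by positivity)
  rw [hpow, neg_mul, Real.exp_neg]
  field_simp

lemma abs_tsum_divisorSum_sub_le {B C : ℝ} (ha : ∀ n, |a n| ≤ C)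
    (hB : ∀ N, |∑ i ∈ Finset.range N, a (i + 1)| ≤ B) :
    ∃ lam : ℝ, ∀ u : ℝ, 0 < u →
      |∑' n : ℕ, divisorSum a n * Real.exp (-n * u) - lam / u| ≤ B := by
  have hcauchy : CauchySeq fun n ↦ ∑ i ∈ Finset.range n, (1 / ((i : ℝ) + 1)) • a (i + 1) := by
    refine Antitone.cauchySeq_series_mul_of_tendsto_zero_of_bounded (fun i j hij ↦ ?_)
      tendsto_one_div_add_atTop_nhds_zero_nat (b := B) hB
    exact one_div_le_one_div_of_le (by positivity) (by gcongr)
  obtain ⟨lam, hlam⟩ := cauchySeq_tendsto_of_complete hcauchy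
  refine ⟨lam, fun u hu ↦ ?_⟩
  obtain ⟨S, hS, hS'⟩ := hasSum_divisorSum_mul_exp ha hu
  rw [hS.tsum_eq]
  refine le_of_tendsto (hS'.tendsto_sum_nat.sub (hlam.div_const u)).abs (.of_forall fun N ↦ ?_)
  have hkernel : ∑ i ∈ Finset.range N, a (i + 1) * (1 / (Real.exp ((i + 1 : ℕ) * u) - 1)) -
      (∑ i ∈ Finset.range N, (1 / ((i : ℝ) + 1)) • a (i + 1)) / u =
      -∑ i ∈ Finset.range N, a (i + 1) * lambertKernel ((i + 1 : ℕ) * u) := by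
    rw [Finset.sum_div, ← Finset.sum_sub_distrib, ← Finset.sum_neg_distrib]
    refine Finset.sum_congr rfl fun i _ ↦ ?_
    simp only [lambertKernel, smul_eq_mul, Nat.cast_add, Nat.cast_one]
    field_simp
    ring
  rw [hkernel, abs_neg]
  have hpos (i : ℕ) : 0 < ((i + 1 : ℕ) : ℝ) * u := by positivity
  refine (abs_sum_mul_le_of_antitone (a := fun i ↦ a (i + 1)) hB (fun i j hij ↦ ?_)
    (fun i ↦ lambertKernel_nonneg (hpos i)) N).trans ?_
  · exact lambertKernel_antitoneOn (hpos i) (hpos j) (by gcongr)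
  · exact mul_le_of_le_one_right ((abs_nonneg _).trans (hB 0)) (lambertKernel_le_one (hpos 0))

end Lambert

/-! ### Mellin transforms of exponential series with a simple polar part -/

/-- The exponential series `Φ(u) = ∑ r(n) exp(-n u)`. -/
def expSeries (r : ℕ → ℝ) (u : ℝ) : ℝ := ∑' n : ℕ, r n * Real.exp (-n * u)

/-- Nonnegative sequences with `r 1 = 1` whose exponential series is `lam / u + O(B)`; the sequences
in mind are the coefficients `1 * χ` of `ζ(s) L(s, χ)`. -/
structure PolarSequence (r : ℕ → ℝ) (lam B : ℝ) : Prop where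
  nonneg : ∀ n, 0 ≤ r n
  map_zero : r 0 = 0
  map_one : r 1 = 1
  summable_exp : ∀ u : ℝ, 0 < u → Summable fun n : ℕ ↦ r n * Real.exp (-n * u)
  summable_rpow : ∀ σ : ℝ, 1 < σ → Summable fun n : ℕ ↦ r n / (n : ℝ) ^ σ
  abs_expSeries_sub_le : ∀ u : ℝ, 0 < u → |expSeries r u - lam / u| ≤ B

/-- The polar part `lam / u` of an exponential series, cut off at `u₀`. -/
def polePart (lam u₀ u : ℝ) : ℝ := if u ≤ u₀ then lam / u else 0

/-- An exponential series minus its truncated polar part; it is bounded near `0`, so its Mellin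
transform converges for `0 < re s`. -/
def remainder (r : ℕ → ℝ) (lam u₀ u : ℝ) : ℝ := expSeries r u - polePart lam u₀ u

/-- The contribution of `u > u₀` to the Mellin transform of `remainder r lam u₀`. -/
def tailMellin (r : ℕ → ℝ) (u₀ s : ℝ) : ℝ := ∫ u in Ioi u₀, u ^ (s - 1) * expSeries r u

/-- The contribution of `u ≤ u₀` to the Mellin transform of `remainder r lam u₀`. -/
def headMellin (r : ℕ → ℝ) (lam u₀ s : ℝ) : ℝ :=
  ∫ u in Ioc 0 u₀, u ^ (s - 1) * (expSeries r u - lam / u)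

lemma polePart_of_le {lam u₀ u : ℝ} (h : u ≤ u₀) : polePart lam u₀ u = lam / u := if_pos h

lemma polePart_of_lt {lam u₀ u : ℝ} (h : u₀ < u) : polePart lam u₀ u = 0 := if_neg h.not_ge

lemma remainder_of_le {r : ℕ → ℝ} {lam u₀ u : ℝ} (h : u ≤ u₀) :
    remainder r lam u₀ u = expSeries r u - lam / u := by rw [remainder, polePart_of_le h]

lemma remainder_of_lt {r : ℕ → ℝ} {lam u₀ u : ℝ} (h : u₀ < u) :
    remainder r lam u₀ u = expSeries r u := by rw [remainder, polePart_of_lt h, sub_zero]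

lemma locallyIntegrableOn_polePart (lam u₀ : ℝ) :
    LocallyIntegrableOn (fun u ↦ (polePart lam u₀ u : ℂ)) (Ioi 0) := by
  rw [locallyIntegrableOn_iff isOpen_Ioi.isLocallyClosed]
  intro k hk hc
  have hdiv : IntegrableOn (fun u : ℝ ↦ lam / u) k :=
    (continuousOn_const.div continuousOn_id fun x hx ↦ (hk hx).ne').integrableOn_compact hc
  refine ((hdiv.indicator (measurableSet_Iic (a := u₀))).ofReal (𝕜 := ℂ)).congr
    (.of_forall fun u ↦ ?_)
  simp [polePart, indicator]

lemma mellin_polePart (lam : ℝ) {u₀ : ℝ} (hu₀ : 0 < u₀) {s : ℂ} (hs : 1 < s.re) :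
    mellin (fun u ↦ (polePart lam u₀ u : ℂ)) s = lam * (u₀ : ℂ) ^ (s - 1) / (s - 1) := by
  have integrand : ∀ t ∈ Ioi (0 : ℝ), (t : ℂ) ^ (s - 1) • (polePart lam u₀ t : ℂ) =
      (Iic u₀).indicator (fun t : ℝ ↦ (lam : ℂ) * (t : ℂ) ^ (s - 2)) t := by
    intro t ht
    have ht0 : (t : ℂ) ≠ 0 := by exact_mod_cast (ne_of_gt ht)
    rcases le_or_gt t u₀ with h | h
    · rw [polePart_of_le h, indicator_of_mem (mem_Iic.2 h), smul_eq_mul,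
        show s - 1 = (s - 2) + 1 by ring, Complex.cpow_add _ _ ht0, Complex.cpow_one]
      push_cast
      field_simp
    · rw [polePart_of_lt h, indicator_of_notMem (notMem_Iic.2 h), Complex.ofReal_zero, smul_zero]
  have hne : s - 1 ≠ 0 := fun h ↦ by
    rw [sub_eq_zero.1 h, Complex.one_re] at hs
    exact lt_irrefl 1 hs
  rw [mellin, setIntegral_congr_fun measurableSet_Ioi integrand,
    setIntegral_indicator measurableSet_Iic, Ioi_inter_Iic,
    ← intervalIntegral.integral_of_le hu₀.le, intervalIntegral.integral_const_mul,
    integral_cpow (Or.inl (by simp; linarith)), show s - 2 + 1 = s - 1 by ring,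
    Complex.ofReal_zero, Complex.zero_cpow hne, sub_zero, mul_div_assoc]

lemma cpow_smul_ofReal_eqOn (f : ℝ → ℝ) (s : ℝ) :
    EqOn (fun t : ℝ ↦ (t : ℂ) ^ ((s : ℂ) - 1) • (f t : ℂ))
      (fun t ↦ ((t ^ (s - 1) * f t : ℝ) : ℂ)) (Ioi 0) := by
  intro t ht
  dsimp only
  rw [smul_eq_mul, Complex.ofReal_mul, Complex.ofReal_cpow (le_of_lt ht), Complex.ofReal_sub,
    Complex.ofReal_one]

namespace PolarSequence

variable {r : ℕ → ℝ} {lam B : ℝ}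

lemma term_nonneg (h : PolarSequence r lam B) (u : ℝ) (n : ℕ) : 0 ≤ r n * Real.exp (-n * u) :=
  mul_nonneg (h.nonneg n) (Real.exp_pos _).le

lemma expSeries_nonneg (h : PolarSequence r lam B) (u : ℝ) : 0 ≤ expSeries r u :=
  tsum_nonneg (h.term_nonneg u)

lemma expSeries_antitoneOn (h : PolarSequence r lam B) : AntitoneOn (expSeries r) (Ioi 0) := by
  intro u hu v hv huv
  refine (h.summable_exp v hv).tsum_le_tsum (fun n ↦ ?_) (h.summable_exp u hu)
  refine mul_le_mul_of_nonneg_left (Real.exp_le_exp.2 ?_) (h.nonneg n)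
  exact mul_le_mul_of_nonpos_left huv (neg_nonpos.2 n.cast_nonneg)

lemma expSeries_le_exp (h : PolarSequence r lam B) {u : ℝ} (hu : 1 ≤ u) :
    expSeries r u ≤ expSeries r 1 * Real.exp (-(u - 1)) := by
  rw [expSeries, expSeries, ← tsum_mul_right]
  refine (h.summable_exp u (by linarith)).tsum_le_tsum (fun n ↦ ?_)
    ((h.summable_exp 1 one_pos).mul_right _)
  rcases Nat.eq_zero_or_pos n with rfl | hn
  · simp [h.map_zero]
  rw [mul_assoc, ← Real.exp_add]
  refine mul_le_mul_of_nonneg_left (Real.exp_le_exp.2 ?_) (h.nonneg n)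
  have hn1 : (1 : ℝ) ≤ n := by exact_mod_cast hn
  nlinarith

lemma one_third_le_expSeries_one (h : PolarSequence r lam B) : 1 / 3 ≤ expSeries r 1 :=
  calc (1 / 3 : ℝ) ≤ 1 / Real.exp 1 :=
        one_div_le_one_div_of_le (Real.exp_pos 1) Real.exp_one_lt_three.le
    _ = r 1 * Real.exp (-(1 : ℕ) * 1) := by rw [h.map_one, one_mul, one_div, ← Real.exp_neg]; simp
    _ ≤ expSeries r 1 := (h.summable_exp 1 one_pos).le_tsum 1 fun n _ ↦ h.term_nonneg 1 n

section Convergence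

variable {u₀ : ℝ}

lemma locallyIntegrableOn_expSeries (h : PolarSequence r lam B) :
    LocallyIntegrableOn (fun u ↦ (expSeries r u : ℂ)) (Ioi 0) := by
  rw [locallyIntegrableOn_iff isOpen_Ioi.isLocallyClosed]
  intro k hk hc
  exact ((h.expSeries_antitoneOn.mono hk).integrableOn_isCompact hc).ofReal

lemma expSeries_isBigO_atTop (h : PolarSequence r lam B) :
    (fun u ↦ (expSeries r u : ℂ)) =O[atTop] fun t ↦ Real.exp (-1 * t) := by
  refine .of_bound (expSeries r 1 * Real.exp 1) ?_
  filter_upwards [eventually_ge_atTop 1] with u hu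
  rw [Complex.norm_real, Real.norm_of_nonneg (h.expSeries_nonneg u),
    Real.norm_of_nonneg (Real.exp_pos _).le, mul_assoc, ← Real.exp_add]
  refine (h.expSeries_le_exp hu).trans_eq ?_
  ring_nf

lemma expSeries_isBigO_zero (h : PolarSequence r lam B) :
    (fun u ↦ (expSeries r u : ℂ)) =O[𝓝[>] 0] fun t : ℝ ↦ t ^ (-1 : ℝ) := by
  refine .of_bound (B + |lam|) ?_
  filter_upwards [Ioc_mem_nhdsGT (zero_lt_one' ℝ)] with u ⟨hu0, hu1⟩
  rw [Complex.norm_real, Real.norm_eq_abs, Real.rpow_neg_one, Real.norm_of_nonneg (by positivity)]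
  have hbound := h.abs_expSeries_sub_le u hu0
  calc |expSeries r u| ≤ |expSeries r u - lam / u| + |lam / u| := by
        simpa using abs_add_le (expSeries r u - lam / u) (lam / u)
    _ ≤ B * 1 + |lam| * u⁻¹ := by
        rw [abs_div, abs_of_pos hu0, div_eq_mul_inv |lam|, mul_one]
        gcongr
    _ ≤ B * u⁻¹ + |lam| * u⁻¹ := by
        gcongr
        · exact (abs_nonneg _).trans hbound
        · exact (one_le_inv₀ hu0).2 hu1
    _ = (B + |lam|) * u⁻¹ := by ring

lemma mellinConvergent_expSeries (h : PolarSequence r lam B) {s : ℂ} (hs : 1 < s.re) :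
    MellinConvergent (fun u ↦ (expSeries r u : ℂ)) s :=
  mellinConvergent_of_isBigO_rpow_exp one_pos h.locallyIntegrableOn_expSeries
    h.expSeries_isBigO_atTop h.expSeries_isBigO_zero hs

lemma locallyIntegrableOn_remainder (h : PolarSequence r lam B) :
    LocallyIntegrableOn (fun u ↦ (remainder r lam u₀ u : ℂ)) (Ioi 0) := by
  convert! h.locallyIntegrableOn_expSeries.sub (locallyIntegrableOn_polePart lam u₀) using 2
  simp [remainder]

lemma remainder_isBigO_atTop (h : PolarSequence r lam B) :
    (fun u ↦ (remainder r lam u₀ u : ℂ)) =O[atTop] fun t ↦ Real.exp (-1 * t) := by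
  refine h.expSeries_isBigO_atTop.congr' ?_ EventuallyEq.rfl
  filter_upwards [eventually_gt_atTop u₀] with u hu
  rw [remainder_of_lt hu]

lemma remainder_isBigO_zero (h : PolarSequence r lam B) (hu₀ : 0 < u₀) :
    (fun u ↦ (remainder r lam u₀ u : ℂ)) =O[𝓝[>] 0] fun t : ℝ ↦ t ^ (-0 : ℝ) := by
  refine .of_bound B ?_
  filter_upwards [Ioc_mem_nhdsGT hu₀] with u hu
  rw [remainder_of_le hu.2, neg_zero, Real.rpow_zero, norm_one, mul_one, Complex.norm_real]
  exact h.abs_expSeries_sub_le u hu.1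

lemma mellinConvergent_remainder (h : PolarSequence r lam B)
    (hu₀ : 0 < u₀) {s : ℂ} (hs : 0 < s.re) :
    MellinConvergent (fun u ↦ (remainder r lam u₀ u : ℂ)) s :=
  mellinConvergent_of_isBigO_rpow_exp one_pos h.locallyIntegrableOn_remainder
    h.remainder_isBigO_atTop (h.remainder_isBigO_zero hu₀) hs

lemma differentiableAt_mellin_remainder (h : PolarSequence r lam B)
    (hu₀ : 0 < u₀) {s : ℂ} (hs : 0 < s.re) :
    DifferentiableAt ℂ (mellin fun u ↦ (remainder r lam u₀ u : ℂ)) s :=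
  mellin_differentiableAt_of_isBigO_rpow_exp one_pos h.locallyIntegrableOn_remainder
    h.remainder_isBigO_atTop (h.remainder_isBigO_zero hu₀) hs

lemma mellin_expSeries (h : PolarSequence r lam B) {s : ℂ} (hs : 1 < s.re) :
    mellin (fun u ↦ (expSeries r u : ℂ)) s =
      Complex.Gamma s * LSeries (fun n ↦ (r n : ℂ)) s := by
  have hsum := hasSum_mellin (a := fun n : ℕ ↦ (r n : ℂ)) (p := fun n : ℕ ↦ (n : ℝ))
    (F := fun u ↦ (expSeries r u : ℂ)) (s := s) (fun n ↦ ?_) (by linarith) (fun t ht ↦ ?_) ?_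
  · rw [← hsum.tsum_eq, LSeries, ← tsum_mul_left]
    refine tsum_congr fun n ↦ ?_
    rcases Nat.eq_zero_or_pos n with rfl | hn
    · simp [h.map_zero]
    · simp [LSeries.term_of_ne_zero hn.ne', mul_div_assoc]
  · rcases Nat.eq_zero_or_pos n with rfl | hn
    · exact .inl (by simp [h.map_zero])
    · exact .inr (by exact_mod_cast hn)
  · simpa [expSeries] using Complex.hasSum_ofReal.2 (h.summable_exp t ht).hasSum
  · refine (h.summable_rpow s.re hs).congr fun n ↦ ?_
    rw [Complex.norm_real, Real.norm_of_nonneg (h.nonneg n)]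

lemma mellin_remainder_add (h : PolarSequence r lam B) (hu₀ : 0 < u₀) {s : ℂ} (hs : 1 < s.re) :
    mellin (fun u ↦ (remainder r lam u₀ u : ℂ)) s + lam * (u₀ : ℂ) ^ (s - 1) / (s - 1) =
      Complex.Gamma s * LSeries (fun n ↦ (r n : ℂ)) s := by
  have hsub := (hasMellin_sub (h.mellinConvergent_expSeries hs)
    (h.mellinConvergent_remainder hu₀ (s := s) (by linarith))).2
  have hpole : (fun t ↦ (expSeries r t : ℂ) - (remainder r lam u₀ t : ℂ)) =
      fun t ↦ (polePart lam u₀ t : ℂ) := by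
    ext t
    simp [remainder]
  rw [hpole] at hsub
  rw [← h.mellin_expSeries hs, ← mellin_polePart lam hu₀ hs, hsub]
  ring

end Convergence

section Real

variable {u₀ s s' : ℝ}

lemma integrableOn_rpow_mul_remainder (h : PolarSequence r lam B) (hu₀ : 0 < u₀) (hs : 0 < s) :
    IntegrableOn (fun u : ℝ ↦ u ^ (s - 1) * remainder r lam u₀ u) (Ioi 0) := by
  have hconv := h.mellinConvergent_remainder hu₀ (s := (s : ℂ)) (by simpa using hs)
  simpa using!
    ((integrableOn_congr_fun (cpow_smul_ofReal_eqOn _ s) measurableSet_Ioi).1 hconv).re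

lemma integrableOn_rpow_mul_expSeries (h : PolarSequence r lam B) (hu₀ : 0 < u₀) (hs : 0 < s) :
    IntegrableOn (fun u : ℝ ↦ u ^ (s - 1) * expSeries r u) (Ioi u₀) := by
  refine (integrableOn_congr_fun (fun u hu ↦ ?_) measurableSet_Ioi).1
    ((h.integrableOn_rpow_mul_remainder hu₀ hs).mono_set (Ioi_subset_Ioi hu₀.le))
  rw [remainder_of_lt hu]

lemma mellin_remainder_ofReal (h : PolarSequence r lam B) (hu₀ : 0 < u₀) (hs : 0 < s) :
    mellin (fun u ↦ (remainder r lam u₀ u : ℂ)) s =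
      ((tailMellin r u₀ s + headMellin r lam u₀ s : ℝ) : ℂ) := by
  have hint := h.integrableOn_rpow_mul_remainder hu₀ hs
  have hsplit : ∫ u in Ioi 0, u ^ (s - 1) * remainder r lam u₀ u =
      tailMellin r u₀ s + headMellin r lam u₀ s := by
    rw [← Ioc_union_Ioi_eq_Ioi hu₀.le, setIntegral_union (Ioc_disjoint_Ioi le_rfl)
      measurableSet_Ioi (hint.mono_set Ioc_subset_Ioi_self)
      (hint.mono_set (Ioi_subset_Ioi hu₀.le)), add_comm]
    congr 1
    · exact setIntegral_congr_fun measurableSet_Ioi fun u hu ↦ by rw [remainder_of_lt hu]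
    · exact setIntegral_congr_fun measurableSet_Ioc fun u hu ↦ by rw [remainder_of_le hu.2]
  rw [mellin, setIntegral_congr_fun measurableSet_Ioi (cpow_smul_ofReal_eqOn _ s), ← hsplit]
  exact integral_ofReal

lemma abs_headMellin_le (h : PolarSequence r lam B) (hu₀ : 0 < u₀) (hs : 0 < s) :
    |headMellin r lam u₀ s| ≤ B * (u₀ ^ s / s) := by
  have hint : IntegrableOn (fun u : ℝ ↦ u ^ (s - 1)) (Ioc 0 u₀) := by
    rw [← intervalIntegrable_iff_integrableOn_Ioc_of_le hu₀.le]
    exact intervalIntegral.intervalIntegrable_rpow' (by linarith)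
  have hpow : ∫ u in Ioc 0 u₀, u ^ (s - 1) = u₀ ^ s / s := by
    rw [← intervalIntegral.integral_of_le hu₀.le, integral_rpow (Or.inl (by linarith)),
      sub_add_cancel, Real.zero_rpow hs.ne', sub_zero]
  rw [← hpow, ← integral_const_mul, ← Real.norm_eq_abs]
  refine norm_integral_le_of_norm_le (hint.const_mul B) ?_
  refine (ae_restrict_iff' measurableSet_Ioc).2 (.of_forall fun u hu ↦ ?_)
  have hnonneg : 0 ≤ u ^ (s - 1) := Real.rpow_nonneg hu.1.le _
  rw [norm_mul, Real.norm_of_nonneg hnonneg, mul_comm]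
  exact mul_le_mul_of_nonneg_right (h.abs_expSeries_sub_le u hu.1) hnonneg

lemma tailMellin_le_rpow_mul (h : PolarSequence r lam B)
    (hu₀ : 0 < u₀) (hs : 0 < s) (hss' : s ≤ s') :
    tailMellin r u₀ s ≤ u₀ ^ (-(s' - s)) * tailMellin r u₀ s' := by
  rw [tailMellin, tailMellin, ← integral_const_mul]
  refine setIntegral_mono_on (h.integrableOn_rpow_mul_expSeries hu₀ hs)
    ((h.integrableOn_rpow_mul_expSeries hu₀ (hs.trans_le hss')).const_mul _)
    measurableSet_Ioi fun u hu ↦ ?_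
  have hu0 : 0 < u := hu₀.trans hu
  have hpow : u ^ (s - 1) = u ^ (-(s' - s)) * u ^ (s' - 1) := by
    rw [← Real.rpow_add hu0]
    ring_nf
  rw [← mul_assoc, hpow]
  refine mul_le_mul_of_nonneg_right (mul_le_mul_of_nonneg_right ?_ (Real.rpow_nonneg hu0.le _))
    (h.expSeries_nonneg u)
  exact Real.rpow_le_rpow_of_nonpos hu₀ (le_of_lt hu) (by linarith)

lemma expSeries_one_div_four_le (h : PolarSequence r lam B)
    (hu₀ : 0 < u₀) (hu₀' : u₀ ≤ 1 / 2) (hs : 0 < s) (hs2 : s ≤ 2) :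
    expSeries r 1 / 4 ≤ ∫ u in Ioc u₀ 1, u ^ (s - 1) * expSeries r u := by
  have hint := (h.integrableOn_rpow_mul_expSeries hu₀ hs).mono_set
    (Ioc_subset_Ioi_self : Ioc u₀ 1 ⊆ Ioi u₀)
  have hhalf : Ioc (1 / 2 : ℝ) 1 ⊆ Ioc u₀ 1 := Ioc_subset_Ioc_left hu₀'
  calc expSeries r 1 / 4 = ∫ u in Ioc (1 / 2 : ℝ) 1, (1 / 2) * expSeries r 1 := by
        rw [setIntegral_const, Real.volume_real_Ioc_of_le (by norm_num), smul_eq_mul]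
        ring
    _ ≤ ∫ u in Ioc (1 / 2 : ℝ) 1, u ^ (s - 1) * expSeries r u := by
        refine setIntegral_mono_on (integrableOn_const (by simp)) (hint.mono_set hhalf)
          measurableSet_Ioc fun u hu ↦ ?_
        have hu0 : 0 < u := by linarith [hu.1]
        have hpow : u ^ (1 : ℝ) ≤ u ^ (s - 1) :=
          Real.rpow_le_rpow_of_exponent_ge hu0 hu.2 (by linarith)
        rw [Real.rpow_one] at hpow
        exact mul_le_mul (hu.1.le.trans hpow)
          (h.expSeries_antitoneOn hu0 (mem_Ioi.2 one_pos) hu.2) (h.expSeries_nonneg 1)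
          (by positivity)
    _ ≤ ∫ u in Ioc u₀ 1, u ^ (s - 1) * expSeries r u := by
        refine setIntegral_mono_set hint ?_ hhalf.eventuallyLE
        refine (ae_restrict_iff' measurableSet_Ioc).2 (.of_forall fun u hu ↦ ?_)
        exact mul_nonneg (Real.rpow_nonneg (hu₀.trans hu.1).le _) (h.expSeries_nonneg u)

lemma tailMellin_eq_add (h : PolarSequence r lam B) (hu₀ : 0 < u₀) (hu₀' : u₀ ≤ 1) (hs : 0 < s) :
    tailMellin r u₀ s = (∫ u in Ioc u₀ 1, u ^ (s - 1) * expSeries r u) + tailMellin r 1 s := by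
  have hint := h.integrableOn_rpow_mul_expSeries hu₀ hs
  rw [tailMellin, tailMellin, ← Ioc_union_Ioi_eq_Ioi hu₀', setIntegral_union
    (Ioc_disjoint_Ioi le_rfl) measurableSet_Ioi (hint.mono_set Ioc_subset_Ioi_self)
    (hint.mono_set (Ioi_subset_Ioi hu₀'))]

lemma tailMellin_nonneg (h : PolarSequence r lam B) (hu₀ : 0 ≤ u₀) : 0 ≤ tailMellin r u₀ s :=
  setIntegral_nonneg measurableSet_Ioi fun u hu ↦
    mul_nonneg (Real.rpow_nonneg (hu₀.trans_lt hu).le _) (h.expSeries_nonneg u)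

lemma one_twelfth_le_tailMellin (h : PolarSequence r lam B)
    (hu₀ : 0 < u₀) (hu₀' : u₀ ≤ 1 / 2) (hs : 0 < s) (hs2 : s ≤ 2) :
    1 / 12 ≤ tailMellin r u₀ s := by
  rw [h.tailMellin_eq_add hu₀ (by linarith) hs]
  linarith [h.expSeries_one_div_four_le hu₀ hu₀' hs hs2, h.tailMellin_nonneg zero_le_one (s := s),
    h.one_third_le_expSeries_one]

lemma tailMellin_one_le (h : PolarSequence r lam B) (hs : 0 < s) (hs2 : s ≤ 2) :
    tailMellin r 1 s ≤ 4 * expSeries r 1 := by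
  have hle : tailMellin r 1 s ≤
      ∫ u in Ioi 1, (2 * Real.exp (1 / 2) * expSeries r 1) * Real.exp (-(1 / 2) * u) := by
    refine setIntegral_mono_on (h.integrableOn_rpow_mul_expSeries one_pos hs)
      ((integrableOn_exp_mul_Ioi (by norm_num) 1).const_mul _) measurableSet_Ioi fun u hu ↦ ?_
    have hu1 : 1 < u := hu
    have hpow : u ^ (s - 1) ≤ u ^ (1 : ℝ) :=
      Real.rpow_le_rpow_of_exponent_le hu1.le (by linarith)
    rw [Real.rpow_one] at hpow
    have hexp : u ≤ 2 * Real.exp ((u - 1) / 2) := by linarith [Real.add_one_le_exp ((u - 1) / 2)]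
    have := h.expSeries_nonneg 1
    calc u ^ (s - 1) * expSeries r u
        ≤ (2 * Real.exp ((u - 1) / 2)) * (expSeries r 1 * Real.exp (-(u - 1))) :=
          mul_le_mul (hpow.trans hexp) (h.expSeries_le_exp hu1.le) (h.expSeries_nonneg u)
            (by positivity)
      _ = 2 * expSeries r 1 * (Real.exp ((u - 1) / 2) * Real.exp (-(u - 1))) := by ring
      _ = 2 * expSeries r 1 * (Real.exp (1 / 2) * Real.exp (-(1 / 2) * u)) := by
          rw [← Real.exp_add, ← Real.exp_add]
          ring_nf
      _ = 2 * Real.exp (1 / 2) * expSeries r 1 * Real.exp (-(1 / 2) * u) := by ring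
  refine hle.trans_eq ?_
  have hcancel : Real.exp (1 / 2) * Real.exp (-(1 / 2) * 1) = 1 := by
    rw [← Real.exp_add]
    norm_num
  rw [integral_const_mul, integral_exp_mul_Ioi (by norm_num)]
  linear_combination 4 * expSeries r 1 * hcancel

lemma tailMellin_le_mul (h : PolarSequence r lam B)
    (hu₀ : 0 < u₀) (hu₀' : u₀ ≤ 1 / 2) (hs : 0 < s) (hss' : s ≤ s')
    (hs2 : s' ≤ 2) : tailMellin r u₀ s' ≤ 17 * tailMellin r u₀ s := by
  have hs' : 0 < s' := hs.trans_le hss'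
  have hmid : ∫ u in Ioc u₀ 1, u ^ (s' - 1) * expSeries r u ≤
      ∫ u in Ioc u₀ 1, u ^ (s - 1) * expSeries r u := by
    refine setIntegral_mono_on
      ((h.integrableOn_rpow_mul_expSeries hu₀ hs').mono_set Ioc_subset_Ioi_self)
      ((h.integrableOn_rpow_mul_expSeries hu₀ hs).mono_set Ioc_subset_Ioi_self)
      measurableSet_Ioc fun u hu ↦ mul_le_mul_of_nonneg_right ?_ (h.expSeries_nonneg u)
    exact Real.rpow_le_rpow_of_exponent_ge (hu₀.trans hu.1) hu.2 (by linarith)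
  rw [h.tailMellin_eq_add hu₀ (by linarith) hs, h.tailMellin_eq_add hu₀ (by linarith) hs']
  linarith [h.expSeries_one_div_four_le hu₀ hu₀' hs (hss'.trans hs2), h.tailMellin_one_le hs' hs2,
    h.tailMellin_nonneg zero_le_one (s := s)]

end Real

end PolarSequence

/-! ### The factor `(s - 1) ζ(s) Γ(s)` -/

/-- The function `(s - 1) ζ(s) Γ(s)`, with its removable singularity at `s = 1` filled in. -/
def regZetaGamma (s : ℂ) : ℂ := DirichletCharacter.LFunctionTrivChar₁ 1 s * Complex.Gamma s

lemma regZetaGamma_one : regZetaGamma 1 = 1 := by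
  simp [regZetaGamma, DirichletCharacter.LFunctionTrivChar₁]

lemma regZetaGamma_of_ne_one {s : ℂ} (hs : s ≠ 1) :
    regZetaGamma s = (s - 1) * riemannZeta s * Complex.Gamma s := by
  have hzeta := DirichletCharacter.LFunctionTrivChar_eq_mul_riemannZeta (N := 1) hs
  rw [Nat.primeFactors_one, Finset.prod_empty, one_mul] at hzeta
  rw [regZetaGamma, DirichletCharacter.LFunctionTrivChar₁, Function.update_of_ne hs, hzeta]

lemma differentiableAt_regZetaGamma {s : ℂ} (hs : 0 < s.re) :
    DifferentiableAt ℂ regZetaGamma s := by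
  refine (DirichletCharacter.differentiable_LFunctionTrivChar₁ 1 s).mul
    (Complex.differentiableAt_Gamma s fun m hm ↦ ?_)
  rw [hm, Complex.neg_re, Complex.natCast_re] at hs
  linarith [(Nat.cast_nonneg m : (0 : ℝ) ≤ m)]

lemma regZetaGamma_ne_zero_of_one_le_re {s : ℂ} (hs : 1 ≤ s.re) : regZetaGamma s ≠ 0 := by
  rcases eq_or_ne s 1 with rfl | hs1
  · simp [regZetaGamma_one]
  · rw [regZetaGamma_of_ne_one hs1]
    exact mul_ne_zero (mul_ne_zero (sub_ne_zero.2 hs1) (riemannZeta_ne_zero_of_one_le_re hs))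
      (Complex.Gamma_ne_zero_of_re_pos (by linarith))

lemma continuousOn_norm_regZetaGamma :
    ContinuousOn (fun s : ℝ ↦ ‖regZetaGamma s‖) (Ioi 0) := fun _ hs ↦
  (((differentiableAt_regZetaGamma (by simpa using hs)).continuousAt.comp
    Complex.continuous_ofReal.continuousAt).norm).continuousWithinAt

lemma exists_norm_regZetaGamma_bounds :
    ∃ ε m M : ℝ, 0 < ε ∧ ε ≤ 1 / 2 ∧ 0 < m ∧
      ∀ s ∈ Icc (1 - ε) 2, m ≤ ‖regZetaGamma s‖ ∧ ‖regZetaGamma s‖ ≤ M := by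
  have hne : ∀ᶠ s : ℝ in 𝓝 1, 0 < ‖regZetaGamma s‖ :=
    (continuousOn_norm_regZetaGamma.continuousAt (Ioi_mem_nhds one_pos)).eventually
      (lt_mem_nhds (by simp [regZetaGamma_one]))
  obtain ⟨δ, hδ, hball⟩ := Metric.eventually_nhds_iff.1 hne
  set ε := min (δ / 2) (1 / 2)
  have hε0 : 0 < ε := by positivity
  have hεδ : ε ≤ δ / 2 := min_le_left _ _
  have hε2 : ε ≤ 1 / 2 := min_le_right _ _
  have hpos : ∀ s ∈ Icc (1 - ε) 2, 0 < ‖regZetaGamma s‖ := by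
    intro s hs
    rcases le_or_gt s 1 with h | h
    · refine hball ?_
      rw [Real.dist_eq, abs_lt]
      constructor <;> linarith [hs.1]
    · exact norm_pos_iff.2 (regZetaGamma_ne_zero_of_one_le_re (by simpa using h.le))
  have hcont : ContinuousOn (fun s : ℝ ↦ ‖regZetaGamma s‖) (Icc (1 - ε) 2) :=
    continuousOn_norm_regZetaGamma.mono fun s hs ↦ mem_Ioi.2 (by linarith [hs.1])
  have hnonempty : (Icc (1 - ε) 2).Nonempty := ⟨1, by linarith, by norm_num⟩
  obtain ⟨x, hx, hmin⟩ := isCompact_Icc.exists_isMinOn hnonempty hcont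
  obtain ⟨y, -, hmax⟩ := isCompact_Icc.exists_isMaxOn hnonempty hcont
  exact ⟨ε, _, _, hε0, hε2, hpos x hx, fun s hs ↦ ⟨hmin hs, hmax hs⟩⟩

/-! ### The sequence `1 * χ` of a real character -/

section Quadratic

variable {q : ℕ} {χ : DirichletCharacter ℂ q}

/-- The real part of a Dirichlet character on the natural numbers; it carries all the information
when `χ ^ 2 = 1`. -/
def reVal (χ : DirichletCharacter ℂ q) (n : ℕ) : ℝ := (χ n).re

lemma re_apply_eq (h2 : χ ^ 2 = 1) (a : ZMod q) : ((χ a).re : ℂ) = χ a := by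
  rcases MulChar.isQuadratic_iff_sq_eq_one.mpr h2 a with h | h | h <;> simp [h]

lemma ofReal_reVal (h2 : χ ^ 2 = 1) (n : ℕ) : (reVal χ n : ℂ) = χ n := re_apply_eq h2 n

lemma abs_re_apply_le_one (χ : DirichletCharacter ℂ q) (a : ZMod q) : |(χ a).re| ≤ 1 :=
  (Complex.abs_re_le_norm _).trans (χ.norm_le_one a)

lemma abs_reVal_le_one (χ : DirichletCharacter ℂ q) (n : ℕ) : |reVal χ n| ≤ 1 :=
  abs_re_apply_le_one χ n

lemma ofReal_divisorSum_reVal (h2 : χ ^ 2 = 1) (n : ℕ) :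
    (divisorSum (reVal χ) n : ℂ) = χ.zetaMul n := by
  rw [divisorSum, DirichletCharacter.zetaMul, ArithmeticFunction.coe_zeta_mul_apply,
    Complex.ofReal_sum]
  refine Finset.sum_congr rfl fun d hd ↦ ?_
  rw [ofReal_reVal h2]
  simp [toArithmeticFunction, (Nat.pos_of_mem_divisors hd).ne']

lemma summable_divisorSum_reVal_div_rpow (h2 : χ ^ 2 = 1) {σ : ℝ} (hσ : 1 < σ) :
    Summable fun n : ℕ ↦ divisorSum (reVal χ) n / (n : ℝ) ^ σ := by
  have hsum := (χ.LSeriesSummable_zetaMul (s := σ) (by simpa using hσ)).norm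
  refine hsum.of_norm_bounded fun n ↦ ?_
  rcases Nat.eq_zero_or_pos n with rfl | hn
  · simp
  · rw [LSeries.term_of_ne_zero hn.ne', norm_div, norm_div, ← ofReal_divisorSum_reVal h2,
      Complex.norm_real, Complex.norm_natCast_cpow_of_pos hn, Complex.ofReal_re,
      Real.norm_of_nonneg (Real.rpow_nonneg n.cast_nonneg _)]

variable [NeZero q]

lemma sum_range_natCast_add (f : ZMod q → ℝ) (M : ℕ) :
    ∑ i ∈ Finset.range q, f ((M + i : ℕ) : ZMod q) = ∑ x, f x := by
  refine Finset.sum_nbij' (fun i ↦ ((M + i : ℕ) : ZMod q)) (fun x ↦ (x - M).val)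
    (fun _ _ ↦ Finset.mem_univ _) (fun x _ ↦ Finset.mem_range.2 (ZMod.val_lt _))
    (fun i hi ↦ ?_) (fun x _ ↦ ?_) (fun _ _ ↦ rfl)
  · simp [ZMod.val_cast_of_lt (Finset.mem_range.1 hi)]
  · simp

lemma abs_sum_range_le_of_sum_eq_zero {f : ZMod q → ℝ} {C : ℝ} (hf : ∑ x, f x = 0)
    (hC : ∀ x, |f x| ≤ C) (N : ℕ) :
    |∑ i ∈ Finset.range N, f ((i + 1 : ℕ) : ZMod q)| ≤ q * C := by
  induction N using Nat.strong_induction_on with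
  | _ N ih =>
    rcases lt_or_ge N q with h | h
    · calc |∑ i ∈ Finset.range N, f ((i + 1 : ℕ) : ZMod q)|
          ≤ ∑ i ∈ Finset.range N, |f ((i + 1 : ℕ) : ZMod q)| := Finset.abs_sum_le_sum_abs _ _
        _ ≤ ∑ _ ∈ Finset.range N, C := Finset.sum_le_sum fun _ _ ↦ hC _
        _ = N * C := by rw [Finset.sum_const, Finset.card_range, nsmul_eq_mul]
        _ ≤ q * C := by
          gcongr
          exact (abs_nonneg _).trans (hC 0)
    · obtain ⟨M, rfl⟩ := Nat.exists_eq_add_of_le' h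
      have hperiod : ∑ i ∈ Finset.range q, f ((M + i + 1 : ℕ) : ZMod q) = 0 := by
        rw [← hf, ← sum_range_natCast_add f (M + 1)]
        simp only [add_right_comm]
      rw [Finset.sum_range_add, hperiod, add_zero]
      exact ih M (by have := NeZero.pos q; omega)

lemma sum_re_eq_zero (h1 : χ ≠ 1) : ∑ x : ZMod q, (χ x).re = 0 := by
  rw [← Complex.re_sum, MulChar.sum_eq_zero_of_ne_one h1, Complex.zero_re]

lemma exists_polarSequence (h2 : χ ^ 2 = 1) (h1 : χ ≠ 1) :
    ∃ lam : ℝ, PolarSequence (divisorSum (reVal χ)) lam q := by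
  have habs := abs_reVal_le_one χ
  obtain ⟨lam, hlam⟩ := abs_tsum_divisorSum_sub_le (B := q) habs fun N ↦ by
    simpa only [mul_one, reVal] using
      abs_sum_range_le_of_sum_eq_zero (sum_re_eq_zero h1) (abs_re_apply_le_one χ) N
  refine ⟨lam, fun n ↦ ?_, divisorSum_zero _, by simp [divisorSum, reVal], fun u hu ↦ ?_,
    fun σ hσ ↦ summable_divisorSum_reVal_div_rpow h2 hσ, hlam⟩
  · have hnonneg := DirichletCharacter.zetaMul_nonneg h2 n
    rw [← ofReal_divisorSum_reVal h2] at hnonneg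
    exact_mod_cast hnonneg
  · obtain ⟨S, hS, -⟩ := hasSum_divisorSum_mul_exp habs hu
    exact hS.summable

lemma LSeries_divisorSum_reVal (h2 : χ ^ 2 = 1) {s : ℂ} (hs : 1 < s.re) :
    LSeries (fun n ↦ (divisorSum (reVal χ) n : ℂ)) s = riemannZeta s * χ.LFunction s := by
  have hmul := ArithmeticFunction.LSeries_mul'
    (f := (ArithmeticFunction.zeta : ArithmeticFunction ℂ))
    (g := toArithmeticFunction (χ ·)) (s := s)
    (ArithmeticFunction.LSeriesSummable_zeta_iff.mpr hs)
    (LSeriesSummable_of_bounded_of_one_lt_re (m := 1) (fun n hn ↦ by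
      simpa only [toArithmeticFunction, ArithmeticFunction.coe_mk, hn, ↓reduceIte]
        using χ.norm_le_one _) hs)
  simp only [ofReal_divisorSum_reVal h2]
  rw [DirichletCharacter.zetaMul, hmul]
  congr 1
  · exact ArithmeticFunction.LSeries_zeta_eq_riemannZeta hs
  · rw [χ.LFunction_eq_LSeries hs]
    refine LSeries_congr (fun {n} hn ↦ ?_) s
    simp [toArithmeticFunction, hn]

end Quadratic

/-! ### The Mellin transform near the pole -/

namespace PolarSequence

variable {r : ℕ → ℝ} {lam B : ℝ}

lemma regZetaGamma_mul_eq (h : PolarSequence r lam B) {L : ℂ → ℂ}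
    (hL : DifferentiableOn ℂ L {s | 0 < s.re})
    (hLr : ∀ s : ℂ, 1 < s.re → LSeries (fun n ↦ (r n : ℂ)) s = riemannZeta s * L s)
    {u₀ : ℝ} (hu₀ : 0 < u₀) {s : ℂ} (hs : 0 < s.re) :
    regZetaGamma s * L s =
      (s - 1) * mellin (fun u ↦ (remainder r lam u₀ u : ℂ)) s + lam * (u₀ : ℂ) ^ (s - 1) := by
  set U : Set ℂ := {s | 0 < s.re} with hU
  have hUo : IsOpen U := isOpen_lt continuous_const Complex.continuous_re
  have hleft : AnalyticOnNhd ℂ (fun s ↦ regZetaGamma s * L s) U := DifferentiableOn.analyticOnNhd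
    (fun z hz ↦ (differentiableAt_regZetaGamma hz).differentiableWithinAt.mul (hL z hz)) hUo
  have hright : AnalyticOnNhd ℂ (fun s ↦ (s - 1) * mellin (fun u ↦ (remainder r lam u₀ u : ℂ)) s +
      lam * (u₀ : ℂ) ^ (s - 1)) U := by
    refine DifferentiableOn.analyticOnNhd (fun z hz ↦ DifferentiableAt.differentiableWithinAt ?_)
      hUo
    have hsub : DifferentiableAt ℂ (fun s : ℂ ↦ s - 1) z := by fun_prop
    exact (hsub.mul (h.differentiableAt_mellin_remainder hu₀ hz)).add
      ((hsub.const_cpow (Or.inl (by exact_mod_cast hu₀.ne'))).const_mul _)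
  refine hleft.eqOn_of_preconnected_of_eventuallyEq hright
    (convex_halfSpace_re_gt 0).isPreconnected (z₀ := 2) (by simp [hU]) ?_ hs
  filter_upwards [(isOpen_lt continuous_const Complex.continuous_re).mem_nhds
    (show (1 : ℝ) < (2 : ℂ).re by simp)] with z hz
  have hz1 : z ≠ 1 := by
    rintro rfl
    exact lt_irrefl 1 hz
  have hz1' : z - 1 ≠ 0 := sub_ne_zero.2 hz1
  have hmellin := h.mellin_remainder_add hu₀ hz
  rw [hLr z hz] at hmellin
  rw [regZetaGamma_of_ne_one hz1]
  field_simp at hmellin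
  linear_combination -hmellin

lemma lam_nonneg (h : PolarSequence r lam B) : 0 ≤ lam := by
  by_contra! hneg
  have hB : 0 ≤ B := (abs_nonneg _).trans (h.abs_expSeries_sub_le 1 one_pos)
  have hbound := h.abs_expSeries_sub_le (-lam / (B + 1)) (div_pos (by linarith) (by linarith))
  have hvalue : lam / (-lam / (B + 1)) = -(B + 1) := by
    field_simp [hneg.ne]
  rw [hvalue, abs_le] at hbound
  linarith [hbound.2, h.expSeries_nonneg (-lam / (B + 1))]

end PolarSequence

/-! ### Harnack inequality at the scale `1 / log Q` -/

/-- The point `1 + η / log Q`, that is, `s = 1 + η / log Q` in the coordinate `η` natural for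
moduli up to `Q`. -/
def scalePt (Q η : ℝ) : ℝ := 1 + η / Real.log Q

/-- The point at which the Mellin integral is split into `headMellin` and `tailMellin`. The exponent
`-6` makes the head negligible: it is at most `Q * Q ^ (-3)` up to a constant. -/
def cutoff (Q : ℝ) : ℝ := Q ^ (-6 : ℝ)

@[simp]
lemma scalePt_zero (Q : ℝ) : scalePt Q 0 = 1 := by
  rw [scalePt, zero_div, add_zero]

lemma two_lt_log {Q : ℝ} (hQ : 16 ≤ Q) : 2 < Real.log Q :=
  calc (2 : ℝ) < 4 * Real.log 2 := by linarith [Real.log_two_gt_d9]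
    _ = Real.log 16 := by
      rw [show (16 : ℝ) = 2 ^ 4 by norm_num, Real.log_pow]
      norm_num
    _ ≤ Real.log Q := Real.log_le_log (by norm_num) hQ

lemma scalePt_mem_Icc {Q η : ℝ} (hQ : 16 ≤ Q) (hη : η ∈ Icc (-1) 1) :
    scalePt Q η ∈ Icc (1 / 2) 2 := by
  have hlog := two_lt_log hQ
  have hupper : η / Real.log Q ≤ 1 / 2 := by
    rw [div_le_iff₀ (by linarith)]
    linarith [hη.2]
  have hlower : -(1 / 2) ≤ η / Real.log Q := by
    rw [le_div_iff₀ (by linarith)]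
    linarith [hη.1]
  constructor <;> rw [scalePt] <;> linarith

section Cutoff

variable {Q : ℝ}

lemma cutoff_pos (hQ : 16 ≤ Q) : 0 < cutoff Q := Real.rpow_pos_of_pos (by linarith) _

lemma cutoff_le_half (hQ : 16 ≤ Q) : cutoff Q ≤ 1 / 2 :=
  calc cutoff Q ≤ 16 ^ (-6 : ℝ) :=
        Real.rpow_le_rpow_of_nonpos (by norm_num) hQ (by norm_num)
    _ ≤ 1 / 2 := by
      rw [Real.rpow_neg (by norm_num)]
      norm_num

lemma cutoff_rpow_div_log (hQ : 16 ≤ Q) (η : ℝ) :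
    cutoff Q ^ (η / Real.log Q) = Real.exp (-6 * η) := by
  have hlog := two_lt_log hQ
  rw [cutoff, ← Real.rpow_mul (by linarith), Real.rpow_def_of_pos (by linarith)]
  congr 1
  field_simp

lemma mul_cutoff_rpow_div_le (hQ : 16 ≤ Q) {s : ℝ} (hs : 1 / 2 ≤ s) :
    Q * (cutoff Q ^ s / s) ≤ 1 / 24 := by
  have hQ0 : 0 < Q := by linarith
  have hpow : cutoff Q ^ s ≤ (Q ^ 3)⁻¹ :=
    calc cutoff Q ^ s = Q ^ (-6 * s) := by rw [cutoff, ← Real.rpow_mul hQ0.le]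
      _ ≤ Q ^ (-3 : ℝ) := Real.rpow_le_rpow_of_exponent_le (by linarith) (by linarith)
      _ = (Q ^ 3)⁻¹ := by rw [Real.rpow_neg hQ0.le]; norm_cast
  calc Q * (cutoff Q ^ s / s) ≤ Q * ((Q ^ 3)⁻¹ / (1 / 2)) := by gcongr
    _ = 2 / Q ^ 2 := by field_simp
    _ ≤ 1 / 24 := by
      rw [div_le_div_iff₀ (by positivity) (by norm_num)]
      nlinarith

end Cutoff

/-- The regular part `∫ u ^ (s - 1) * remainder`, at `s = scalePt Q η` and divided by `log Q`. -/
def scaledMellin (r : ℕ → ℝ) (lam Q η : ℝ) : ℝ :=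
  (tailMellin r (cutoff Q) (scalePt Q η) + headMellin r lam (cutoff Q) (scalePt Q η)) / Real.log Q

/-- The constant in the Harnack inequality for `scaledMellin`. -/
def harnackConst : ℝ := 3 * Real.exp 12

lemma exp_six_le_harnackConst : Real.exp 6 ≤ harnackConst := by
  have hexp : Real.exp 6 ≤ Real.exp 12 := Real.exp_le_exp.2 (by norm_num)
  rw [harnackConst]
  linarith [Real.exp_pos 12]

/-- A model on `[-1, 1]` of a function with a simple pole of residue `lam`, multiplied by the pole:
the regular part `G` is positive and comparable to itself at all points, up to the factor `K`. -/
structure HarnackProfile (K lam : ℝ) (G : ℝ → ℝ) : Prop where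
  residue_pos : 0 < lam
  pos : ∀ η ∈ Icc (-1 : ℝ) 1, 0 < G η
  le_mul : ∀ η ∈ Icc (-1 : ℝ) 1, ∀ η' ∈ Icc (-1 : ℝ) 1, G η ≤ K * G η'
  continuousOn : ContinuousOn (fun η ↦ η * G η) (Icc (-1) 1)

/-- The function `η * G η + lam * exp (-6 * η)` described by a `HarnackProfile`; the exponential is
`cutoff Q ^ (s - 1)` at `s = scalePt Q η`. -/
def profile (lam : ℝ) (G : ℝ → ℝ) (η : ℝ) : ℝ := η * G η + lam * Real.exp (-6 * η)

namespace HarnackProfile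

variable {K lam : ℝ} {G : ℝ → ℝ}

lemma one_le (h : HarnackProfile K lam G) : 1 ≤ K := by
  have h0 : (0 : ℝ) ∈ Icc (-1) 1 := by norm_num
  exact (le_mul_iff_one_le_left (h.pos 0 h0)).1 (h.le_mul 0 h0 0 h0)

lemma profile_pos (h : HarnackProfile K lam G) {η : ℝ} (hη : η ∈ Icc 0 1) :
    0 < profile lam G η := by
  have := h.pos η ⟨by linarith [hη.1], hη.2⟩
  have := h.residue_pos
  have := hη.1
  rw [profile]
  positivity

lemma apply_one_le_profile (h : HarnackProfile K lam G) : G 1 ≤ profile lam G 1 := by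
  rw [profile, one_mul, le_add_iff_nonneg_right]
  exact mul_nonneg h.residue_pos.le (Real.exp_pos _).le

lemma mul_apply_le (h : HarnackProfile K lam G) {η : ℝ} (hη : η ∈ Icc 0 1) :
    η * G η ≤ K * η * G 1 := by
  rw [mul_comm K, mul_assoc]
  exact mul_le_mul_of_nonneg_left
    (h.le_mul η ⟨by linarith [hη.1], hη.2⟩ 1 (by norm_num)) hη.1

lemma residue_mul_exp_le (h : HarnackProfile K lam G) {η : ℝ} (hη : 0 ≤ η) :
    lam * Real.exp (-6 * η) ≤ lam :=
  mul_le_of_le_one_right h.residue_pos.le (Real.exp_le_one_iff.2 (by linarith))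

lemma profile_le (h : HarnackProfile K lam G) (hK : Real.exp 6 ≤ K) {η : ℝ} (hη : η ∈ Icc 0 1) :
    profile lam G η ≤ K * profile lam G 1 := by
  have hG : K * η * G 1 ≤ K * G 1 := by
    have := h.one_le
    have := h.pos 1 (by norm_num)
    gcongr
    exact mul_le_of_le_one_right (by linarith) hη.2
  have hlam : lam ≤ K * (lam * Real.exp (-6)) :=
    calc lam = Real.exp 6 * (lam * Real.exp (-6)) := by
          rw [mul_left_comm, ← Real.exp_add]
          norm_num
      _ ≤ K * (lam * Real.exp (-6)) := by
          have := h.residue_pos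
          gcongr
  simp only [profile, one_mul, mul_one, mul_add]
  linarith [h.mul_apply_le hη, h.residue_mul_exp_le hη.1]

lemma profile_le_of_zero (h : HarnackProfile K lam G) {c θ η : ℝ} (hθ : 0 < θ) (hθc : θ ≤ c)
    (hc : c ≤ 1) (hzero : profile lam G (-θ) = 0) (hη : η ∈ Icc 0 1) :
    profile lam G η ≤ K * (η + c) * profile lam G 1 := by
  have hmem : -θ ∈ Icc (-1 : ℝ) 1 := ⟨by linarith, by linarith⟩
  have hK := h.one_le
  have hlam : lam ≤ c * (K * G 1) :=
    calc lam ≤ lam * Real.exp (-6 * -θ) :=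
          le_mul_of_one_le_right h.residue_pos.le (Real.one_le_exp (by linarith))
      _ = θ * G (-θ) := by
          rw [profile] at hzero
          linarith
      _ ≤ c * (K * G 1) :=
          mul_le_mul hθc (h.le_mul _ hmem 1 (by norm_num)) (h.pos _ hmem).le (by linarith)
  calc profile lam G η ≤ K * η * G 1 + c * (K * G 1) :=
        add_le_add (h.mul_apply_le hη) ((h.residue_mul_exp_le hη.1).trans hlam)
    _ = K * (η + c) * G 1 := by ring
    _ ≤ K * (η + c) * profile lam G 1 :=
        mul_le_mul_of_nonneg_left h.apply_one_le_profile
          (mul_nonneg (by linarith) (by linarith [hη.1]))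

lemma profile_pos_of_ne_zero (h : HarnackProfile K lam G) {δ : ℝ} (hδ : 0 ≤ δ) (hδ1 : δ ≤ 1)
    (hne : ∀ η ∈ Icc (-δ) 0, profile lam G η ≠ 0) : 0 < profile lam G (-δ) := by
  by_contra! hle
  have hcont : ContinuousOn (profile lam G) (Icc (-δ) 0) :=
    (h.continuousOn.mono (Icc_subset_Icc (by linarith) zero_le_one)).add (by fun_prop)
  obtain ⟨η, hη, hη0⟩ := intermediate_value_Icc (by linarith) hcont
    ⟨hle, (h.profile_pos (by norm_num)).le⟩
  exact hne η hη hη0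

lemma profile_one_le_of_ne_zero (h : HarnackProfile K lam G) {c : ℝ} (hc : 0 < c) (hc1 : c ≤ 1)
    (hne : ∀ η ∈ Icc (-(c / 2)) 0, profile lam G η ≠ 0) :
    profile lam G 1 ≤ 3 * K * Real.exp 3 / c * profile lam G 0 := by
  have hmem : -(c / 2) ∈ Icc (-1 : ℝ) 1 := ⟨by linarith, by linarith⟩
  have hK := h.one_le
  have hlam := h.residue_pos
  have hG : c / 2 * G (-(c / 2)) ≤ lam * Real.exp 3 := by
    have hexp : lam * Real.exp (-6 * -(c / 2)) ≤ lam * Real.exp 3 := by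
      gcongr
      linarith
    have hpos := h.profile_pos_of_ne_zero (by linarith) (by linarith) hne
    rw [profile] at hpos
    linarith
  have hG1 : c * G 1 ≤ 2 * K * Real.exp 3 * lam :=
    calc c * G 1 ≤ c * (K * G (-(c / 2))) :=
          mul_le_mul_of_nonneg_left (h.le_mul 1 (by norm_num) _ hmem) hc.le
      _ = 2 * K * (c / 2 * G (-(c / 2))) := by ring
      _ ≤ 2 * K * (lam * Real.exp 3) := by gcongr
      _ = 2 * K * Real.exp 3 * lam := by ring
  have hclam : c * (lam * Real.exp (-6 * 1)) ≤ K * Real.exp 3 * lam :=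
    calc c * (lam * Real.exp (-6 * 1)) ≤ 1 * lam :=
          mul_le_mul hc1 (h.residue_mul_exp_le zero_le_one) (by positivity) zero_le_one
      _ ≤ K * Real.exp 3 * lam := by
          gcongr
          exact one_le_mul_of_one_le_of_one_le hK (Real.one_le_exp (by norm_num))
  rw [div_mul_eq_mul_div, le_div_iff₀ hc]
  simp only [profile, zero_mul, mul_zero, Real.exp_zero, mul_one, one_mul, zero_add] at hclam ⊢
  linarith

end HarnackProfile

namespace PolarSequence

variable {r : ℕ → ℝ} {lam B Q η η' : ℝ}

lemma tailMellin_cutoff_pos (h : PolarSequence r lam B) (hQ : 16 ≤ Q) (hη : η ∈ Icc (-1) 1) :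
    0 < tailMellin r (cutoff Q) (scalePt Q η) := by
  have hmem := scalePt_mem_Icc hQ hη
  linarith [h.one_twelfth_le_tailMellin (cutoff_pos hQ) (cutoff_le_half hQ)
    (by linarith [hmem.1]) hmem.2]

lemma abs_headMellin_cutoff_le (h : PolarSequence r lam B) (hQ : 16 ≤ Q) (hB : B ≤ Q)
    (hη : η ∈ Icc (-1) 1) :
    |headMellin r lam (cutoff Q) (scalePt Q η)| ≤ tailMellin r (cutoff Q) (scalePt Q η) / 2 := by
  have hmem := scalePt_mem_Icc hQ hη
  have hs : 0 < scalePt Q η := by linarith [hmem.1]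
  have hcut := cutoff_pos hQ
  calc |headMellin r lam (cutoff Q) (scalePt Q η)|
      ≤ B * (cutoff Q ^ scalePt Q η / scalePt Q η) := h.abs_headMellin_le hcut hs
    _ ≤ Q * (cutoff Q ^ scalePt Q η / scalePt Q η) := by gcongr
    _ ≤ 1 / 24 := mul_cutoff_rpow_div_le hQ hmem.1
    _ ≤ tailMellin r (cutoff Q) (scalePt Q η) / 2 := by
      linarith [h.one_twelfth_le_tailMellin hcut (cutoff_le_half hQ) hs hmem.2]

lemma tailMellin_cutoff_le_mul (h : PolarSequence r lam B) (hQ : 16 ≤ Q) (hη : η ∈ Icc (-1) 1)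
    (hη' : η' ∈ Icc (-1) 1) :
    tailMellin r (cutoff Q) (scalePt Q η) ≤
      Real.exp 12 * tailMellin r (cutoff Q) (scalePt Q η') := by
  have hlog := two_lt_log hQ
  have htail := (h.tailMellin_cutoff_pos hQ hη').le
  rcases le_total η η' with hle | hle
  · have hmono := h.tailMellin_le_rpow_mul (cutoff_pos hQ) (s := scalePt Q η) (s' := scalePt Q η')
      (by linarith [(scalePt_mem_Icc hQ hη).1]) (by unfold scalePt; gcongr)
    rw [show -(scalePt Q η' - scalePt Q η) = (η - η') / Real.log Q by unfold scalePt; ring,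
      cutoff_rpow_div_log hQ] at hmono
    refine hmono.trans (mul_le_mul_of_nonneg_right (Real.exp_le_exp.2 ?_) htail)
    linarith [hη.1, hη'.2]
  · have hanti := h.tailMellin_le_mul (cutoff_pos hQ) (cutoff_le_half hQ) (s := scalePt Q η')
      (s' := scalePt Q η) (by linarith [(scalePt_mem_Icc hQ hη').1]) (by unfold scalePt; gcongr)
      (scalePt_mem_Icc hQ hη).2
    refine hanti.trans (mul_le_mul_of_nonneg_right ?_ htail)
    calc (17 : ℝ) ≤ (6 + 1) * (6 + 1) := by norm_num
      _ ≤ Real.exp 6 * Real.exp 6 := by gcongr <;> exact Real.add_one_le_exp 6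
      _ = Real.exp 12 := by rw [← Real.exp_add]; norm_num

lemma scaledMellin_pos (h : PolarSequence r lam B) (hQ : 16 ≤ Q) (hB : B ≤ Q)
    (hη : η ∈ Icc (-1) 1) : 0 < scaledMellin r lam Q η := by
  have htail := h.tailMellin_cutoff_pos hQ hη
  have hhead := abs_le.1 (h.abs_headMellin_cutoff_le hQ hB hη)
  exact div_pos (by linarith [hhead.1]) (by linarith [two_lt_log hQ])

lemma scaledMellin_le_mul (h : PolarSequence r lam B) (hQ : 16 ≤ Q) (hB : B ≤ Q)
    (hη : η ∈ Icc (-1) 1) (hη' : η' ∈ Icc (-1) 1) :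
    scaledMellin r lam Q η ≤ harnackConst * scaledMellin r lam Q η' := by
  have hlog := two_lt_log hQ
  have hhead := abs_le.1 (h.abs_headMellin_cutoff_le hQ hB hη)
  have hhead' := abs_le.1 (h.abs_headMellin_cutoff_le hQ hB hη')
  have htail := h.tailMellin_cutoff_le_mul hQ hη hη'
  rw [scaledMellin, scaledMellin, harnackConst, ← mul_div_assoc]
  gcongr
  nlinarith [Real.exp_pos 12]

section LFunction

variable {L : ℂ → ℂ}

lemma regZetaGamma_mul_scalePt (hL : DifferentiableOn ℂ L {s | 0 < s.re})
    (hLr : ∀ s : ℂ, 1 < s.re → LSeries (fun n ↦ (r n : ℂ)) s = riemannZeta s * L s)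
    (h : PolarSequence r lam B) (hQ : 16 ≤ Q) (hη : η ∈ Icc (-1) 1) :
    regZetaGamma (scalePt Q η) * L (scalePt Q η) =
      (profile lam (scaledMellin r lam Q) η : ℝ) := by
  have hs : 0 < scalePt Q η := by linarith [(scalePt_mem_Icc hQ hη).1]
  have hsub : (scalePt Q η : ℂ) - 1 = ((η / Real.log Q : ℝ) : ℂ) := by
    rw [scalePt]
    push_cast
    ring
  rw [h.regZetaGamma_mul_eq hL hLr (cutoff_pos hQ) (by simpa using hs),
    h.mellin_remainder_ofReal (cutoff_pos hQ) hs, hsub, ← Complex.ofReal_cpow (cutoff_pos hQ).le,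
    cutoff_rpow_div_log hQ, profile, scaledMellin]
  push_cast
  ring

lemma continuousOn_mul_scaledMellin (hL : DifferentiableOn ℂ L {s | 0 < s.re})
    (hLr : ∀ s : ℂ, 1 < s.re → LSeries (fun n ↦ (r n : ℂ)) s = riemannZeta s * L s)
    (h : PolarSequence r lam B) (hQ : 16 ≤ Q) :
    ContinuousOn (fun η ↦ η * scaledMellin r lam Q η) (Icc (-1) 1) := by
  have heq : EqOn (fun η ↦ η * scaledMellin r lam Q η)
      (fun η ↦ (regZetaGamma (scalePt Q η) * L (scalePt Q η)).re - lam * Real.exp (-6 * η))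
      (Icc (-1) 1) := fun η hη ↦ by
    simp only [h.regZetaGamma_mul_scalePt hL hLr hQ hη, Complex.ofReal_re, profile,
      add_sub_cancel_right]
  refine ContinuousOn.congr (.sub (Complex.continuous_re.comp_continuousOn fun η hη ↦ ?_)
    (by fun_prop)) heq
  have hs : 0 < (scalePt Q η : ℂ).re := by
    rw [Complex.ofReal_re]
    linarith [(scalePt_mem_Icc hQ hη).1]
  have houter : ContinuousAt (fun s ↦ regZetaGamma s * L s) (scalePt Q η) :=
    ((differentiableAt_regZetaGamma hs).mul (hL.differentiableAt
      ((isOpen_lt continuous_const Complex.continuous_re).mem_nhds hs))).continuousAt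
  have hinner : ContinuousAt (fun η : ℝ ↦ (scalePt Q η : ℂ)) η := by
    unfold scalePt
    fun_prop
  exact (ContinuousAt.comp (f := fun η : ℝ ↦ (scalePt Q η : ℂ)) houter hinner).continuousWithinAt

lemma apply_one_eq (hL : DifferentiableOn ℂ L {s | 0 < s.re})
    (hLr : ∀ s : ℂ, 1 < s.re → LSeries (fun n ↦ (r n : ℂ)) s = riemannZeta s * L s)
    (h : PolarSequence r lam B) : L 1 = lam := by
  have hone := h.regZetaGamma_mul_scalePt hL hLr le_rfl (η := 0) (by norm_num)
  simpa [profile, regZetaGamma_one] using hone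

lemma harnackProfile (hL : DifferentiableOn ℂ L {s | 0 < s.re})
    (hLr : ∀ s : ℂ, 1 < s.re → LSeries (fun n ↦ (r n : ℂ)) s = riemannZeta s * L s)
    (h : PolarSequence r lam B) (hL1 : L 1 ≠ 0) (hQ : 16 ≤ Q) (hB : B ≤ Q) :
    HarnackProfile harnackConst lam (scaledMellin r lam Q) where
  residue_pos := h.lam_nonneg.lt_of_ne' fun hlam ↦ hL1 (by
    rw [h.apply_one_eq hL hLr, hlam, Complex.ofReal_zero])
  pos _ hη := h.scaledMellin_pos hQ hB hη
  le_mul _ hη _ hη' := h.scaledMellin_le_mul hQ hB hη hη'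
  continuousOn := h.continuousOn_mul_scaledMellin hL hLr hQ

end LFunction

end PolarSequence

/-- `L(s, χ)` has a real zero within `c / log Q` of `1`. -/
def HasExceptionalZero {q : ℕ} [NeZero q] (c Q : ℝ) (χ : DirichletCharacter ℂ q) : Prop :=
  ∃ β : ℝ, χ.LFunction β = 0 ∧ 1 - c / Real.log Q < β

/-- The size of `L(s, χ)` at the points `scalePt Q η`, compared to `η = 1`. -/
structure ScaleBounds {q : ℕ} [NeZero q] (ε K Q : ℝ) (χ : DirichletCharacter ℂ q) : Prop where
  norm_le : ∀ η ∈ Icc (0 : ℝ) 1,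
    ‖χ.LFunction (scalePt Q η)‖ ≤ K * ‖χ.LFunction (scalePt Q 1)‖
  norm_le_of_exceptional : ∀ c ∈ Ioc (0 : ℝ) 1, HasExceptionalZero c Q χ → ∀ η ∈ Icc (0 : ℝ) 1,
    ‖χ.LFunction (scalePt Q η)‖ ≤ K * (η + c) * ‖χ.LFunction (scalePt Q 1)‖
  norm_le_of_not_exceptional : ∀ c ∈ Ioc (0 : ℝ) ε, ¬ HasExceptionalZero c Q χ →
    ‖χ.LFunction (scalePt Q 1)‖ ≤ K / c * ‖χ.LFunction 1‖

section Transfer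

variable {q : ℕ} [NeZero q] {χ : DirichletCharacter ℂ q} {Q : ℝ}

lemma exists_harnackProfile (h2 : χ ^ 2 = 1) (h1 : χ ≠ 1) (hQ : 16 ≤ Q) (hq : q ≤ Q) :
    ∃ lam G, HarnackProfile harnackConst lam G ∧ ∀ η ∈ Icc (-1 : ℝ) 1,
      regZetaGamma (scalePt Q η) * χ.LFunction (scalePt Q η) = (profile lam G η : ℝ) := by
  obtain ⟨lam, h⟩ := exists_polarSequence h2 h1
  have hdiff := (χ.differentiable_LFunction h1).differentiableOn (s := {s | 0 < s.re})
  have hLr := fun (s : ℂ) (hs : 1 < s.re) ↦ LSeries_divisorSum_reVal h2 hs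
  exact ⟨lam, _, h.harnackProfile hdiff hLr (χ.LFunction_apply_one_ne_zero h1) hQ hq,
    fun η hη ↦ h.regZetaGamma_mul_scalePt hdiff hLr hQ hη⟩

lemma HasExceptionalZero.exists_scalePt {c : ℝ} (h : HasExceptionalZero c Q χ) (h1 : χ ≠ 1)
    (hQ : 16 ≤ Q) : ∃ θ, 0 < θ ∧ θ ≤ c ∧ χ.LFunction (scalePt Q (-θ)) = 0 := by
  obtain ⟨β, hβ, hβc⟩ := h
  have hlog := two_lt_log hQ
  have hβ1 : β < 1 := by
    by_contra! hcon
    exact χ.LFunction_ne_zero_of_one_le_re (Or.inl h1) (s := β) (by simpa using hcon) hβ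
  have hθ : scalePt Q (-((1 - β) * Real.log Q)) = β := by
    rw [scalePt]
    field_simp
    ring
  refine ⟨(1 - β) * Real.log Q, mul_pos (by linarith) (by linarith), ?_, by rwa [hθ]⟩
  rw [← le_div_iff₀ (by linarith)]
  linarith

lemma norm_LFunction_scalePt_le {m M A lam K η η' : ℝ} {G : ℝ → ℝ} (hm : 0 < m)
    (h : HarnackProfile K lam G)
    (hid : ∀ η ∈ Icc (-1 : ℝ) 1,
      regZetaGamma (scalePt Q η) * χ.LFunction (scalePt Q η) = (profile lam G η : ℝ))
    (hη : η ∈ Icc 0 1) (hη' : η' ∈ Icc 0 1) (hlower : m ≤ ‖regZetaGamma (scalePt Q η)‖)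
    (hupper : ‖regZetaGamma (scalePt Q η')‖ ≤ M) (hA : 0 ≤ A)
    (hle : profile lam G η ≤ A * profile lam G η') :
    ‖χ.LFunction (scalePt Q η)‖ ≤ M / m * A * ‖χ.LFunction (scalePt Q η')‖ := by
  have hnorm {η : ℝ} (hη : η ∈ Icc 0 1) :
      ‖regZetaGamma (scalePt Q η)‖ * ‖χ.LFunction (scalePt Q η)‖ = profile lam G η := by
    rw [← norm_mul, hid η ⟨by linarith [hη.1], hη.2⟩, Complex.norm_real,
      Real.norm_of_nonneg (h.profile_pos hη).le]
  rw [div_mul_eq_mul_div, div_mul_eq_mul_div, le_div_iff₀' hm]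
  calc m * ‖χ.LFunction (scalePt Q η)‖
      ≤ ‖regZetaGamma (scalePt Q η)‖ * ‖χ.LFunction (scalePt Q η)‖ := by gcongr
    _ ≤ A * (‖regZetaGamma (scalePt Q η')‖ * ‖χ.LFunction (scalePt Q η')‖) := by
      rwa [hnorm hη, hnorm hη']
    _ ≤ A * (M * ‖χ.LFunction (scalePt Q η')‖) := by gcongr
    _ = M * A * ‖χ.LFunction (scalePt Q η')‖ := by ring

lemma profile_ne_zero_of_not_hasExceptionalZero {c lam η : ℝ} {G : ℝ → ℝ} (hQ : 16 ≤ Q)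
    (hex : ¬HasExceptionalZero c Q χ) (hη : -c < η)
    (hid : regZetaGamma (scalePt Q η) * χ.LFunction (scalePt Q η) = (profile lam G η : ℝ))
    (hreg : regZetaGamma (scalePt Q η) ≠ 0) : profile lam G η ≠ 0 := fun hη0 ↦ by
  have hlog := two_lt_log hQ
  rw [hη0, Complex.ofReal_zero, mul_eq_zero, or_iff_right hreg] at hid
  refine hex ⟨_, hid, ?_⟩
  rw [scalePt, sub_eq_add_neg, ← neg_div]
  gcongr

lemma scaleBounds_of_norm_regZetaGamma {ε m M : ℝ} (hε : 0 < ε) (hε' : ε ≤ 1 / 2) (hm : 0 < m)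
    (hbounds : ∀ s ∈ Icc (1 - ε) 2, m ≤ ‖regZetaGamma s‖ ∧ ‖regZetaGamma s‖ ≤ M)
    (h2 : χ ^ 2 = 1) (h1 : χ ≠ 1) (hQ : 16 ≤ Q) (hq : q ≤ Q) :
    ScaleBounds ε (M / m * (3 * harnackConst * Real.exp 3)) Q χ := by
  obtain ⟨lam, G, h, hid⟩ := exists_harnackProfile h2 h1 hQ hq
  have hlog := two_lt_log hQ
  have hH := h.one_le
  have hHK : harnackConst ≤ 3 * harnackConst * Real.exp 3 := by
    nlinarith [Real.one_le_exp (show (0 : ℝ) ≤ 3 by norm_num)]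
  have hbounds' {η : ℝ} (hη : η ∈ Icc (-ε) 1) :=
    hbounds (scalePt Q η) ⟨by
      have : -ε ≤ η / Real.log Q := by
        rw [le_div_iff₀ (by linarith)]
        nlinarith [hη.1]
      rw [scalePt]
      linarith, (scalePt_mem_Icc hQ ⟨by linarith [hη.1], hη.2⟩).2⟩
  have transfer {A η η' : ℝ} (hη : η ∈ Icc 0 1) (hη' : η' ∈ Icc 0 1) (hA : 0 ≤ A)
      (hle : profile lam G η ≤ A * profile lam G η') :=
    norm_LFunction_scalePt_le hm h hid hη hη' (hbounds' ⟨by linarith [hη.1], hη.2⟩).1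
      (hbounds' ⟨by linarith [hη'.1], hη'.2⟩).2 hA hle
  have hone := (h.profile_pos (right_mem_Icc.2 zero_le_one)).le
  refine ⟨fun η hη ↦ ?_, fun c hc hex η hη ↦ ?_, fun c hc hex ↦ ?_⟩
  · refine transfer hη (by norm_num) (by positivity) ?_
    exact (h.profile_le exp_six_le_harnackConst hη).trans (by gcongr)
  · obtain ⟨θ, hθ, hθc, hzero⟩ := hex.exists_scalePt h1 hQ
    have hzero' := hid (-θ) ⟨by linarith [hc.2], by linarith⟩
    rw [hzero, mul_zero, eq_comm, Complex.ofReal_eq_zero] at hzero'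
    have hηc : 0 ≤ η + c := by linarith [hη.1, hc.1]
    rw [mul_assoc (M / m)]
    refine transfer hη (by norm_num) (by positivity) ?_
    exact (h.profile_le_of_zero hθ hθc hc.2 hzero' hη).trans (by gcongr)
  · have hne : ∀ η ∈ Icc (-(c / 2)) 0, profile lam G η ≠ 0 := fun η hη ↦
      profile_ne_zero_of_not_hasExceptionalZero hQ hex (by linarith [hη.1, hc.1])
        (hid η ⟨by linarith [hη.1, hc.2], by linarith [hη.2]⟩) (norm_pos_iff.1 (hm.trans_le
          (hbounds' ⟨by linarith [hη.1, hc.1, hc.2], by linarith [hη.2]⟩).1))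
    have := transfer (η := 1) (η' := 0) (by norm_num) (by norm_num)
      (div_nonneg (by positivity) hc.1.le)
      (h.profile_one_le_of_ne_zero hc.1 (by linarith [hc.2]) hne)
    rwa [scalePt_zero, Complex.ofReal_one, ← mul_div_assoc] at this

end Transfer

lemma exists_scaleBounds :
    ∃ ε K : ℝ, 0 < ε ∧ ε ≤ 1 / 2 ∧ 1 ≤ K ∧ ∀ (q : ℕ) [NeZero q] (χ : DirichletCharacter ℂ q)
      (Q : ℝ), χ ^ 2 = 1 → χ ≠ 1 → 16 ≤ Q → q ≤ Q → ScaleBounds ε K Q χ := by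
  obtain ⟨ε, m, M, hε, hε', hm, hbounds⟩ := exists_norm_regZetaGamma_bounds
  refine ⟨ε, _, hε, hε', ?_, fun q _ χ Q h2 h1 hQ hq ↦
    scaleBounds_of_norm_regZetaGamma hε hε' hm hbounds h2 h1 hQ hq⟩
  have hmM := hbounds 1 ⟨by linarith, by norm_num⟩
  have hH : 1 ≤ harnackConst := (Real.one_le_exp (by norm_num)).trans exp_six_le_harnackConst
  refine one_le_mul_of_one_le_of_one_le ((one_le_div hm).2 (hmM.1.trans hmM.2)) ?_
  nlinarith [Real.one_le_exp (show (0 : ℝ) ≤ 3 by norm_num)]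

/-! ### Prime sums -/

/-- The sum `∑ f(p) p ^ (-s)` over the primes. -/
def primeSum (f : ℕ → ℝ) (s : ℝ) : ℝ := ∑' p : Nat.Primes, f p * (p : ℝ) ^ (-s)

lemma primes_rpow_nonneg (p : Nat.Primes) (s : ℝ) : 0 ≤ (p : ℝ) ^ s :=
  Real.rpow_nonneg (Nat.cast_nonneg _) _

lemma primes_cpow_neg (p : Nat.Primes) (s : ℝ) :
    (p : ℂ) ^ (-(s : ℂ)) = ((p : ℝ) ^ (-s) : ℝ) := by
  rw [Complex.ofReal_cpow (Nat.cast_nonneg _), Complex.ofReal_neg, Complex.ofReal_natCast]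

lemma primes_rpow_neg_one_le_half (p : Nat.Primes) : (p : ℝ) ^ (-1 : ℝ) ≤ 1 / 2 := by
  rw [Real.rpow_neg_one, one_div]
  exact inv_anti₀ two_pos (by exact_mod_cast p.2.two_le)

lemma norm_mul_primes_rpow_le {f : ℕ → ℝ} (hf : ∀ n, |f n| ≤ 1) (s : ℝ) (p : Nat.Primes) :
    ‖f p * (p : ℝ) ^ (-s)‖ ≤ (p : ℝ) ^ (-s) := by
  rw [norm_mul, Real.norm_eq_abs, Real.norm_of_nonneg (primes_rpow_nonneg p _)]
  exact mul_le_of_le_one_left (primes_rpow_nonneg p _) (hf p)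

lemma summable_primes_rpow {s : ℝ} (hs : 1 < s) : Summable fun p : Nat.Primes ↦ (p : ℝ) ^ (-s) :=
  Nat.Primes.summable_rpow.2 (neg_lt_neg hs)

lemma summable_mul_primes_rpow {f : ℕ → ℝ} (hf : ∀ n, |f n| ≤ 1) {s : ℝ} (hs : 1 < s) :
    Summable fun p : Nat.Primes ↦ f p * (p : ℝ) ^ (-s) :=
  (summable_primes_rpow hs).of_norm_bounded (norm_mul_primes_rpow_le hf s)

lemma primeSum_one (s : ℝ) : primeSum 1 s = ∑' p : Nat.Primes, (p : ℝ) ^ (-s) := by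
  simp only [primeSum, Pi.one_apply, one_mul]

lemma primeSum_one_nonneg (s : ℝ) : 0 ≤ primeSum 1 s := by
  rw [primeSum_one]
  exact tsum_nonneg fun p ↦ primes_rpow_nonneg p _

lemma abs_primeSum_le {f : ℕ → ℝ} (hf : ∀ n, |f n| ≤ 1) {s : ℝ} (hs : 1 < s) :
    |primeSum f s| ≤ primeSum 1 s := by
  rw [primeSum_one, ← Real.norm_eq_abs]
  exact tsum_of_norm_bounded (summable_primes_rpow hs).hasSum (norm_mul_primes_rpow_le hf s)

lemma norm_neg_log_one_sub_sub_le {z : ℂ} (hz : ‖z‖ ≤ 1 / 2) :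
    ‖-Complex.log (1 - z) - z‖ ≤ ‖z‖ ^ 2 := by
  have hlog := Complex.norm_log_one_add_sub_self_le (z := -z) (by rw [norm_neg]; linarith)
  rw [norm_neg] at hlog
  have hinv : (1 - ‖z‖)⁻¹ ≤ 2 := by
    rw [inv_le_comm₀ (by linarith) (by norm_num)]
    linarith
  calc ‖-Complex.log (1 - z) - z‖ = ‖Complex.log (1 + -z) - -z‖ := by
        rw [← norm_neg, ← sub_eq_add_neg 1 z]
        congr 1
        ring
    _ ≤ ‖z‖ ^ 2 * (1 - ‖z‖)⁻¹ / 2 := hlog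
    _ ≤ ‖z‖ ^ 2 * 2 / 2 := by gcongr
    _ = ‖z‖ ^ 2 := mul_div_cancel_right₀ _ two_ne_zero

lemma abs_re_tsum_neg_log_sub_primeSum_le {f : ℕ → ℂ} (hf : ∀ n, ‖f n‖ ≤ 1) {s : ℝ}
    (hs : 1 < s) :
    |(∑' p : Nat.Primes, -Complex.log (1 - f p * (p : ℂ) ^ (-(s : ℂ)))).re -
      primeSum (fun n ↦ (f n).re) s| ≤ primeSum 1 2 := by
  set z : Nat.Primes → ℂ := fun p ↦ f p * (p : ℂ) ^ (-(s : ℂ))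
  have hz (p) : z p = f p * ((p : ℝ) ^ (-s) : ℝ) := by rw [← primes_cpow_neg]
  have hnorm (p) : ‖z p‖ ≤ (p : ℝ) ^ (-s) := by
    rw [hz, norm_mul, Complex.norm_real, Real.norm_of_nonneg (primes_rpow_nonneg p _)]
    exact mul_le_of_le_one_left (primes_rpow_nonneg p _) (hf p)
  have hnorm' (p) : ‖z p‖ ≤ (p : ℝ) ^ (-1 : ℝ) := (hnorm p).trans
    (Real.rpow_le_rpow_of_exponent_le (by exact_mod_cast p.2.one_le) (neg_le_neg hs.le))
  have hdiff (p) : ‖-Complex.log (1 - z p) - z p‖ ≤ (p : ℝ) ^ (-2 : ℝ) :=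
    calc ‖-Complex.log (1 - z p) - z p‖ ≤ ‖z p‖ ^ 2 :=
          norm_neg_log_one_sub_sub_le ((hnorm' p).trans (primes_rpow_neg_one_le_half p))
      _ ≤ ((p : ℝ) ^ (-1 : ℝ)) ^ 2 := by gcongr; exact hnorm' p
      _ = (p : ℝ) ^ (-2 : ℝ) := by
          rw [← Real.rpow_mul_natCast (Nat.cast_nonneg _)]
          norm_num
  have hz_sum : Summable z := (summable_primes_rpow hs).of_norm_bounded hnorm
  have hsq := summable_primes_rpow one_lt_two
  have hlog_sum : Summable fun p ↦ -Complex.log (1 - z p) :=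
    ((hsq.of_norm_bounded hdiff).add hz_sum).congr fun p ↦ by ring
  have hprime : primeSum (fun n ↦ (f n).re) s = (∑' p, z p).re := by
    rw [Complex.re_tsum hz_sum, primeSum]
    exact tsum_congr fun p ↦ by rw [hz, Complex.re_mul_ofReal]
  rw [hprime, ← Complex.sub_re, ← hlog_sum.tsum_sub hz_sum, primeSum_one]
  exact (Complex.abs_re_le_norm _).trans (tsum_of_norm_bounded hsq.hasSum hdiff)

lemma abs_log_norm_LFunction_sub_primeSum_le {q : ℕ} [NeZero q] (χ : DirichletCharacter ℂ q)
    {s : ℝ} (hs : 1 < s) :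
    |Real.log ‖χ.LFunction s‖ - primeSum (reVal χ) s| ≤ primeSum 1 2 := by
  have hs' : 1 < (s : ℂ).re := by simpa using hs
  rw [χ.LFunction_eq_LSeries hs', ← χ.LSeries_eulerProduct_exp_log hs', Complex.norm_exp,
    Real.log_exp]
  exact abs_re_tsum_neg_log_sub_primeSum_le (f := fun n ↦ χ n) (fun n ↦ χ.norm_le_one n) hs

lemma abs_log_norm_riemannZeta_sub_primeSum_le {s : ℝ} (hs : 1 < s) :
    |Real.log ‖riemannZeta s‖ - primeSum 1 s| ≤ primeSum 1 2 := by
  rw [← riemannZeta_eulerProduct_exp_log (by simpa using hs), Complex.norm_exp, Real.log_exp]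
  simpa [Pi.one_def] using abs_re_tsum_neg_log_sub_primeSum_le (f := 1) (by simp) hs

lemma exists_abs_log_mul_riemannZeta_le :
    ∃ K, ∀ t ∈ Ioc (0 : ℝ) 1, |Real.log (t * ‖riemannZeta (1 + t : ℝ)‖)| ≤ K := by
  set F : ℝ → ℝ := fun s ↦ ‖DirichletCharacter.LFunctionTrivChar₁ 1 s‖
  have hF {t : ℝ} (ht : 0 < t) : F (1 + t) = t * ‖riemannZeta (1 + t : ℝ)‖ := by
    have hne : ((1 + t : ℝ) : ℂ) ≠ 1 := by simpa using ht.ne'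
    have hzeta := DirichletCharacter.LFunctionTrivChar_eq_mul_riemannZeta (N := 1) hne
    rw [Nat.primeFactors_one, Finset.prod_empty, one_mul] at hzeta
    simp only [F, DirichletCharacter.LFunctionTrivChar₁, Function.update_of_ne hne, hzeta, norm_mul]
    simp [abs_of_pos ht]
  have hpos : ∀ s ∈ Icc (1 : ℝ) 2, F s ≠ 0 := fun s hs ↦ by
    rcases hs.1.eq_or_lt with rfl | hlt
    · simp [F]
    · rw [← add_sub_cancel 1 s, hF (sub_pos.2 hlt), add_sub_cancel]
      exact mul_ne_zero (sub_ne_zero.2 hlt.ne') (norm_ne_zero_iff.2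
        (riemannZeta_ne_zero_of_one_le_re (by simpa using hs.1)))
  have hcont : ContinuousOn F (Icc 1 2) :=
    ((DirichletCharacter.differentiable_LFunctionTrivChar₁ 1).continuous.comp
      Complex.continuous_ofReal).norm.continuousOn
  obtain ⟨K, hK⟩ := isCompact_Icc.exists_bound_of_continuousOn (hcont.log hpos)
  refine ⟨K, fun t ht ↦ ?_⟩
  rw [← hF ht.1]
  exact hK (1 + t) ⟨by linarith [ht.1], by linarith [ht.2]⟩

lemma exists_abs_primeSum_one_add_log_le :
    ∃ K, ∀ t ∈ Ioc (0 : ℝ) 1, |primeSum 1 (1 + t) + Real.log t| ≤ K := by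
  obtain ⟨K, hK⟩ := exists_abs_log_mul_riemannZeta_le
  refine ⟨K + primeSum 1 2, fun t ht ↦ ?_⟩
  have hzeta : riemannZeta (1 + t : ℝ) ≠ 0 :=
    riemannZeta_ne_zero_of_one_le_re (by simpa using ht.1.le)
  have hlog := hK t ht
  have hprime := abs_log_norm_riemannZeta_sub_primeSum_le (s := 1 + t) (by linarith [ht.1])
  rw [Real.log_mul ht.1.ne' (norm_ne_zero_iff.2 hzeta)] at hlog
  rw [abs_le] at hlog hprime ⊢
  constructor <;> linarith [hlog.1, hlog.2, hprime.1, hprime.2]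

/-! ### Zero repulsion and `log L(1, χ)` -/

lemma div_log_mem_Ioc {Q η : ℝ} (hQ : 16 ≤ Q) (hη : η ∈ Ioc (0 : ℝ) 1) :
    η / Real.log Q ∈ Ioc (0 : ℝ) 1 := by
  have hlog := two_lt_log hQ
  refine ⟨div_pos hη.1 (by linarith), (div_le_one (by linarith)).2 ?_⟩
  linarith [hη.2]

lemma one_lt_scalePt {Q η : ℝ} (hQ : 16 ≤ Q) (hη : η ∈ Ioc (0 : ℝ) 1) : 1 < scalePt Q η :=
  lt_add_of_pos_right 1 (div_log_mem_Ioc hQ hη).1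

lemma norm_LFunction_pos {q : ℕ} [NeZero q] {χ : DirichletCharacter ℂ q} (h1 : χ ≠ 1) {s : ℝ}
    (hs : 1 ≤ s) : 0 < ‖χ.LFunction s‖ :=
  norm_pos_iff.2 (χ.LFunction_ne_zero_of_one_le_re (.inl h1) (by simpa using hs))

lemma reVal_mul {q : ℕ} {χ : DirichletCharacter ℂ q} (h2 : χ ^ 2 = 1)
    (ψ : DirichletCharacter ℂ q) (n : ℕ) : reVal (χ * ψ) n = reVal χ n * reVal ψ n := by
  rw [reVal, MulChar.mul_apply, ← ofReal_reVal h2, Complex.re_ofReal_mul]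
  rfl

/-- The sum is `∑ (1 + χ₁(p)) (1 + χ₂(p)) p ^ (-s)`, whose terms are nonnegative. -/
lemma primeSum_add_le_of_le {q : ℕ} {χ₁ χ₂ : DirichletCharacter ℂ q} (h₁ : χ₁ ^ 2 = 1) {s t : ℝ}
    (hs : 1 < s) (hst : s ≤ t) :
    primeSum 1 t + primeSum (reVal χ₁) t + primeSum (reVal χ₂) t + primeSum (reVal (χ₁ * χ₂)) t ≤
      primeSum 1 s + primeSum (reVal χ₁) s + primeSum (reVal χ₂) s +
        primeSum (reVal (χ₁ * χ₂)) s := by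
  have hasSum {u : ℝ} (hu : 1 < u) : HasSum
      (fun p : Nat.Primes ↦ (1 + reVal χ₁ p) * (1 + reVal χ₂ p) * (p : ℝ) ^ (-u))
      (primeSum 1 u + primeSum (reVal χ₁) u + primeSum (reVal χ₂) u +
        primeSum (reVal (χ₁ * χ₂)) u) := by
    have hone := (summable_mul_primes_rpow (f := 1) (by simp) hu).hasSum
    have hchar (χ : DirichletCharacter ℂ q) :=
      (summable_mul_primes_rpow (abs_reVal_le_one χ) hu).hasSum
    refine (((hone.add (hchar χ₁)).add (hchar χ₂)).add (hchar (χ₁ * χ₂))).congr_fun fun p ↦ ?_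
    rw [reVal_mul h₁, Pi.one_apply]
    ring
  refine hasSum_le (fun p ↦ ?_) (hasSum (hs.trans_le hst)) (hasSum hs)
  have hχ₁ := neg_le_of_abs_le (abs_reVal_le_one χ₁ p)
  have hχ₂ := neg_le_of_abs_le (abs_reVal_le_one χ₂ p)
  have hp : (1 : ℝ) ≤ p := by exact_mod_cast p.2.one_le
  gcongr
  exact mul_nonneg (by linarith) (by linarith)

namespace ScaleBounds

variable {q : ℕ} [NeZero q] {χ χ₁ χ₂ : DirichletCharacter ℂ q} {ε K Q c : ℝ}

lemma primeSum_le_primeSum (h1 : χ ≠ 1) (hQ : 16 ≤ Q) {η a : ℝ} (hη : η ∈ Ioc (0 : ℝ) 1)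
    (ha : 0 < a)
    (hle : ‖χ.LFunction (scalePt Q η)‖ ≤ a * ‖χ.LFunction (scalePt Q 1)‖) :
    primeSum (reVal χ) (scalePt Q η) ≤
      primeSum (reVal χ) (scalePt Q 1) + Real.log a + 2 * primeSum 1 2 := by
  have hs := one_lt_scalePt hQ hη
  have ht := one_lt_scalePt (η := 1) hQ (by norm_num)
  have hlog := Real.log_le_log (norm_LFunction_pos h1 hs.le) hle
  rw [Real.log_mul ha.ne' (norm_LFunction_pos h1 ht.le).ne'] at hlog
  have hη' := abs_le.1 (abs_log_norm_LFunction_sub_primeSum_le χ hs)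
  have hone' := abs_le.1 (abs_log_norm_LFunction_sub_primeSum_le χ ht)
  linarith [hη'.1, hone'.2]

lemma log_norm_le (h : ScaleBounds ε K Q χ) (h1 : χ ≠ 1) (hQ : 16 ≤ Q) (hK : 1 ≤ K) :
    Real.log ‖χ.LFunction 1‖ ≤
      primeSum (reVal χ) (scalePt Q 1) + Real.log K + primeSum 1 2 := by
  have ht := one_lt_scalePt (η := 1) hQ (by norm_num)
  have hle := h.norm_le 0 (by norm_num)
  have hpos := norm_LFunction_pos h1 le_rfl
  rw [scalePt_zero, Complex.ofReal_one] at hle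
  rw [Complex.ofReal_one] at hpos
  have hlog := Real.log_le_log hpos hle
  rw [Real.log_mul (by linarith) (norm_LFunction_pos h1 ht.le).ne'] at hlog
  linarith [(abs_le.1 (abs_log_norm_LFunction_sub_primeSum_le χ ht)).2]

lemma primeSum_le_log_norm (h : ScaleBounds ε K Q χ) (h1 : χ ≠ 1) (hQ : 16 ≤ Q) (hK : 1 ≤ K)
    (hc : c ∈ Ioc 0 ε) (hex : ¬ HasExceptionalZero c Q χ) :
    primeSum (reVal χ) (scalePt Q 1) ≤
      Real.log ‖χ.LFunction 1‖ + Real.log K - Real.log c + primeSum 1 2 := by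
  have ht := one_lt_scalePt (η := 1) hQ (by norm_num)
  have hpos := norm_LFunction_pos h1 le_rfl
  rw [Complex.ofReal_one] at hpos
  have hlog := Real.log_le_log (norm_LFunction_pos h1 ht.le)
    (h.norm_le_of_not_exceptional c hc hex)
  rw [Real.log_mul (div_pos (by linarith) hc.1).ne' hpos.ne',
    Real.log_div (by linarith) hc.1.ne'] at hlog
  linarith [(abs_le.1 (abs_log_norm_LFunction_sub_primeSum_le χ ht)).1]

/-- Two exceptional characters would make the nonnegative sum `∑ (1 + χ₁(p)) (1 + χ₂(p)) p ^ (-s)`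
smaller at `s = 1 + c / log Q` than at `s = 1 + 1 / log Q`: passing from the latter to the former,
the principal term gains `-log c` while each of the exceptional ones loses `-log c`. -/
lemma eq_of_hasExceptionalZero {K' : ℝ} (hscale : ∀ χ : DirichletCharacter ℂ q, χ ^ 2 = 1 → χ ≠ 1 →
      ScaleBounds ε K Q χ)
    (hsum : ∀ t ∈ Ioc (0 : ℝ) 1, |primeSum 1 (1 + t) + Real.log t| ≤ K')
    (hQ : 16 ≤ Q) (hK : 1 ≤ K) (hc : c ∈ Ioc 0 1)
    (hc' : 2 * K' + 6 * primeSum 1 2 + 3 * Real.log K + 2 * Real.log 2 + Real.log c < 0)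
    (hχ₁ : χ₁ ^ 2 = 1) (h₁ : χ₁ ≠ 1) (hχ₂ : χ₂ ^ 2 = 1) (h₂ : χ₂ ≠ 1)
    (hex₁ : HasExceptionalZero c Q χ₁) (hex₂ : HasExceptionalZero c Q χ₂) : χ₁ = χ₂ := by
  by_contra hne
  have hK0 : 0 < K := by linarith
  have hexc {χ : DirichletCharacter ℂ q} (h2 : χ ^ 2 = 1) (h1 : χ ≠ 1)
      (hex : HasExceptionalZero c Q χ) : primeSum (reVal χ) (scalePt Q c) ≤
        primeSum (reVal χ) (scalePt Q 1) + (Real.log K + (Real.log 2 + Real.log c)) +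
          2 * primeSum 1 2 := by
    have := primeSum_le_primeSum h1 hQ hc (mul_pos hK0 (add_pos hc.1 hc.1))
      ((hscale χ h2 h1).norm_le_of_exceptional c hc hex c ⟨hc.1.le, hc.2⟩)
    rwa [← two_mul c, Real.log_mul hK0.ne' (by linarith [hc.1]),
      Real.log_mul two_ne_zero hc.1.ne'] at this
  have hsq : (χ₁ * χ₂) ^ 2 = 1 := by rw [mul_pow, hχ₁, hχ₂, one_mul]
  have hmul : χ₁ * χ₂ ≠ 1 := fun h ↦ hne <|
    mul_right_cancel (b := χ₂) (by rw [h, ← sq, hχ₂])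
  have hprod := primeSum_le_primeSum hmul hQ hc hK0
    ((hscale _ hsq hmul).norm_le c ⟨hc.1.le, hc.2⟩)
  have hanti := primeSum_add_le_of_le (χ₂ := χ₂) hχ₁ (one_lt_scalePt hQ hc)
    (show scalePt Q c ≤ scalePt Q 1 by
      unfold scalePt
      gcongr
      · linarith [two_lt_log hQ]
      · exact hc.2)
  have hc_sum : primeSum 1 (scalePt Q c) + Real.log (c / Real.log Q) ≤ K' :=
    (abs_le.1 (hsum _ (div_log_mem_Ioc hQ hc))).2
  have hone_sum : -K' ≤ primeSum 1 (scalePt Q 1) + Real.log (1 / Real.log Q) :=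
    (abs_le.1 (hsum _ (div_log_mem_Ioc hQ (by norm_num)))).1
  have hlogQ : Real.log Q ≠ 0 := by linarith [two_lt_log hQ]
  rw [Real.log_div hc.1.ne' hlogQ] at hc_sum
  rw [Real.log_div one_ne_zero hlogQ, Real.log_one] at hone_sum
  linarith [hexc hχ₁ h₁ hex₁, hexc hχ₂ h₂ hex₂]

end ScaleBounds

/-- Absolute constants `c` and `K` such that, for quadratic characters modulo `q ≤ Q`, `log L(1, χ)`
agrees up to `K` with the prime sum at `1 + 1 / log Q` unless `χ` has a zero within `c / log Q`
of `1`, and at most one `χ` does. -/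
structure IsAdmissible (c K : ℝ) : Prop where
  pos : 0 < c
  nonneg : 0 ≤ K
  primeSum_one_le : ∀ Q : ℝ, 16 ≤ Q → primeSum 1 (scalePt Q 1) ≤ Real.log (Real.log Q) + K
  primeSum_le : ∀ {q : ℕ} [NeZero q] {χ : DirichletCharacter ℂ q} {Q : ℝ}, χ ^ 2 = 1 → χ ≠ 1 →
    16 ≤ Q → q ≤ Q → ∀ η ∈ Ioc (0 : ℝ) 1,
      primeSum (reVal χ) (scalePt Q η) ≤ primeSum (reVal χ) (scalePt Q 1) + K
  log_norm_le : ∀ {q : ℕ} [NeZero q] {χ : DirichletCharacter ℂ q} {Q : ℝ}, χ ^ 2 = 1 → χ ≠ 1 →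
    16 ≤ Q → q ≤ Q → Real.log ‖χ.LFunction 1‖ ≤ primeSum (reVal χ) (scalePt Q 1) + K
  primeSum_le_log_norm : ∀ {q : ℕ} [NeZero q] {χ : DirichletCharacter ℂ q} {Q : ℝ}, χ ^ 2 = 1 →
    χ ≠ 1 → 16 ≤ Q → q ≤ Q → ¬ HasExceptionalZero c Q χ →
      primeSum (reVal χ) (scalePt Q 1) ≤ Real.log ‖χ.LFunction 1‖ + K
  eq_of_exceptional : ∀ {q : ℕ} [NeZero q] {χ₁ χ₂ : DirichletCharacter ℂ q} {Q : ℝ}, χ₁ ^ 2 = 1 →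
    χ₁ ≠ 1 → χ₂ ^ 2 = 1 → χ₂ ≠ 1 → 16 ≤ Q → q ≤ Q → HasExceptionalZero c Q χ₁ →
      HasExceptionalZero c Q χ₂ → χ₁ = χ₂

lemma exists_isAdmissible : ∃ c K : ℝ, IsAdmissible c K := by
  obtain ⟨ε, K, hε, hε', hK, hscale⟩ := exists_scaleBounds
  obtain ⟨K', hsum⟩ := exists_abs_primeSum_one_add_log_le
  have hlogK := Real.log_nonneg hK
  have hB := primeSum_one_nonneg 2
  have hK' := (abs_nonneg _).trans (hsum 1 (by norm_num))
  set A := 2 * K' + 6 * primeSum 1 2 + 3 * Real.log K + 2 * Real.log 2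
  set c := min ε (Real.exp (-A - 1))
  have hc0 : 0 < c := lt_min hε (Real.exp_pos _)
  have hcε : c ≤ ε := min_le_left _ _
  have hlogc : Real.log c ≤ -A - 1 :=
    (Real.log_le_log hc0 (min_le_right _ _)).trans_eq (Real.log_exp _)
  have hlogc' := Real.log_nonpos hc0.le (by linarith)
  refine ⟨c, K' + 2 * primeSum 1 2 + Real.log K - Real.log c, hc0, by linarith, ?_, ?_, ?_, ?_, ?_⟩
  · intro Q hQ
    have hone := (abs_le.1 (hsum _ (div_log_mem_Ioc (η := 1) hQ (by norm_num)))).2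
    rw [one_div, Real.log_inv, ← one_div] at hone
    rw [scalePt]
    linarith
  · intro q _ χ Q h2 h1 hQ hq η hη
    have := ScaleBounds.primeSum_le_primeSum h1 hQ hη (by linarith)
      ((hscale q χ Q h2 h1 hQ hq).norm_le η ⟨hη.1.le, hη.2⟩)
    linarith
  · intro q _ χ Q h2 h1 hQ hq
    linarith [(hscale q χ Q h2 h1 hQ hq).log_norm_le h1 hQ hK]
  · intro q _ χ Q h2 h1 hQ hq hex
    linarith [(hscale q χ Q h2 h1 hQ hq).primeSum_le_log_norm h1 hQ hK ⟨hc0, hcε⟩ hex]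
  · intro q _ χ₁ χ₂ Q hχ₁ h₁ hχ₂ h₂ hQ hq
    exact ScaleBounds.eq_of_hasExceptionalZero (fun χ h2 h1 ↦ hscale q χ Q h2 h1 hQ hq) hsum hQ hK
      ⟨hc0, by linarith⟩ (by linarith) hχ₁ h₁ hχ₂ h₂

/-! ### Characters with trivial square -/

/-- The group of characters `χ` modulo `q` with `χ ^ 2 = 1`: the quadratic characters and the
principal one. -/
def quadChars (q : ℕ) [NeZero q] : Finset (DirichletCharacter ℂ q) :=
  {χ : DirichletCharacter ℂ q | χ ^ 2 = 1}.toFinite.toFinset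

lemma reVal_mul_reVal {q : ℕ} {χ : DirichletCharacter ℂ q} (h2 : χ ^ 2 = 1) (m n : ℕ) :
    reVal χ m * reVal χ n = (χ ((m * n : ℕ) : ZMod q)).re := by
  rw [Nat.cast_mul, map_mul, ← ofReal_reVal h2 m, Complex.re_ofReal_mul]
  rfl

section QuadChars

variable {q : ℕ} [NeZero q]

@[simp]
lemma mem_quadChars {χ : DirichletCharacter ℂ q} : χ ∈ quadChars q ↔ χ ^ 2 = 1 := by
  rw [quadChars, Set.Finite.mem_toFinset, mem_ofPred_eq]

variable (q) in
lemma card_quadChars_pos : (0 : ℝ) < (quadChars q).card :=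
  Nat.cast_pos.2 (Finset.card_pos.2 ⟨1, mem_quadChars.2 (one_pow 2)⟩)

lemma sum_quadChars_re_eq_zero {a : ZMod q} {ψ : DirichletCharacter ℂ q} (hψ : ψ ^ 2 = 1)
    (ha : ψ a ≠ 1) : ∑ χ ∈ quadChars q, (χ a).re = 0 := by
  have hinvol (χ : DirichletCharacter ℂ q) : ψ * (ψ * χ) = χ := by
    rw [← mul_assoc, ← sq, hψ, one_mul]
  have hmem (χ : DirichletCharacter ℂ q) (hχ : χ ∈ quadChars q) : ψ * χ ∈ quadChars q := by
    rw [mem_quadChars] at hχ ⊢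
    rw [mul_pow, hψ, hχ, one_mul]
  have hshift : ψ a * ∑ χ ∈ quadChars q, χ a = ∑ χ ∈ quadChars q, χ a := by
    rw [Finset.mul_sum]
    exact Finset.sum_nbij' (ψ * ·) (ψ * ·) hmem hmem (fun χ _ ↦ hinvol χ) (fun χ _ ↦ hinvol χ)
      fun χ _ ↦ (MulChar.mul_apply ψ χ a).symm
  rw [← Complex.re_sum, (mul_left_eq_self₀.1 hshift).resolve_left ha, Complex.zero_re]

lemma sum_quadChars_re_nonneg (a : ZMod q) : 0 ≤ ∑ χ ∈ quadChars q, (χ a).re := by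
  by_cases h : ∃ ψ : DirichletCharacter ℂ q, ψ ^ 2 = 1 ∧ ψ a ≠ 1
  · obtain ⟨ψ, hψ, ha⟩ := h
    rw [sum_quadChars_re_eq_zero hψ ha]
  · push Not at h
    refine Finset.sum_nonneg fun χ hχ ↦ ?_
    rw [h χ (mem_quadChars.1 hχ), Complex.one_re]
    exact zero_le_one

/-- By orthogonality the average over `quadChars q` is `0` or `1`. It is `1` when every
`χ ∈ quadChars q` has `χ(n) = 1`, a property which the divisors `P` of `q` inherit. -/
lemma sum_quadChars_re_le_of_dvd {P : ℕ} [NeZero P] (hP : P ∣ q) (n : ℕ) :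
    ∑ χ ∈ quadChars q, (χ n).re ≤
      (quadChars q).card / (quadChars P).card * ∑ ψ ∈ quadChars P, (ψ n).re := by
  by_cases h : ∃ ψ : DirichletCharacter ℂ q, ψ ^ 2 = 1 ∧ ψ n ≠ 1
  · obtain ⟨ψ, hψ, hn⟩ := h
    rw [sum_quadChars_re_eq_zero hψ hn]
    exact mul_nonneg (by positivity) (sum_quadChars_re_nonneg (n : ZMod P))
  · push Not at h
    have hunit : IsUnit (n : ZMod q) := by
      by_contra hn
      exact zero_ne_one ((MulChar.map_nonunit 1 hn).symm.trans (h 1 (one_pow 2)))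
    obtain ⟨u, hu⟩ := hunit
    have hψ (ψ : DirichletCharacter ℂ P) (hψ : ψ ∈ quadChars P) : (ψ n).re = 1 := by
      have hone := h (DirichletCharacter.changeLevel hP ψ)
        (by rw [← map_pow, mem_quadChars.1 hψ, map_one])
      rw [← hu, DirichletCharacter.changeLevel_eq_cast_of_dvd, hu, ZMod.cast_natCast hP] at hone
      rw [hone, Complex.one_re]
    have hχ (χ : DirichletCharacter ℂ q) (hχ : χ ∈ quadChars q) : (χ n).re = 1 := by
      rw [h χ (mem_quadChars.1 hχ), Complex.one_re]
    rw [Finset.sum_congr rfl hψ, Finset.sum_congr rfl hχ, Finset.sum_const, Finset.sum_const,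
      nsmul_one, nsmul_one, div_mul_cancel₀ _ (card_quadChars_pos P).ne']

lemma hasSum_sum_reVal_mul_primeSum {s : ℝ} (hs : 1 < s) (m : ℕ) :
    HasSum (fun p : Nat.Primes ↦ (∑ χ ∈ quadChars q, reVal χ m * reVal χ p) * (p : ℝ) ^ (-s))
      (∑ χ ∈ quadChars q, reVal χ m * primeSum (reVal χ) s) := by
  refine (hasSum_sum fun χ _ ↦
    (summable_mul_primes_rpow (abs_reVal_le_one χ) hs).hasSum.mul_left (reVal χ m)).congr_fun
    fun p ↦ ?_
  rw [Finset.sum_mul]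
  exact Finset.sum_congr rfl fun χ _ ↦ mul_assoc _ _ _

lemma sum_reVal_mul_primeSum_le_of_dvd {P : ℕ} [NeZero P] (hP : P ∣ q) {s : ℝ} (hs : 1 < s)
    (m : ℕ) :
    ∑ χ ∈ quadChars q, reVal χ m * primeSum (reVal χ) s ≤
      (quadChars q).card / (quadChars P).card *
        ∑ ψ ∈ quadChars P, |primeSum (reVal ψ) s| := by
  have hdvd : ∑ χ ∈ quadChars q, reVal χ m * primeSum (reVal χ) s ≤
      (quadChars q).card / (quadChars P).card *
        ∑ ψ ∈ quadChars P, reVal ψ m * primeSum (reVal ψ) s := by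
    refine hasSum_le (fun p ↦ ?_) (hasSum_sum_reVal_mul_primeSum hs m)
      ((hasSum_sum_reVal_mul_primeSum hs m).mul_left _)
    rw [← mul_assoc, Finset.sum_congr rfl fun χ hχ ↦ reVal_mul_reVal (mem_quadChars.1 hχ) m p,
      Finset.sum_congr rfl fun ψ hψ ↦ reVal_mul_reVal (mem_quadChars.1 hψ) m p]
    exact mul_le_mul_of_nonneg_right (sum_quadChars_re_le_of_dvd hP _) (primes_rpow_nonneg p _)
  refine hdvd.trans ?_
  gcongr with ψ _
  refine (le_abs_self _).trans ?_
  rw [abs_mul]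
  exact mul_le_of_le_one_left (abs_nonneg _) (abs_reVal_le_one ψ m)

/-- Opening one factor of the square reduces the second moment modulo `q` to a first moment modulo
any divisor `P`. -/
lemma sum_sq_primeSum_le_of_dvd {P : ℕ} [NeZero P] (hP : P ∣ q) {s : ℝ} (hs : 1 < s) :
    ∑ χ ∈ quadChars q, primeSum (reVal χ) s ^ 2 ≤
      (quadChars q).card / (quadChars P).card * (∑ ψ ∈ quadChars P, |primeSum (reVal ψ) s|) *
        primeSum 1 s := by
  have hsq : HasSum
      (fun p : Nat.Primes ↦ (∑ χ ∈ quadChars q, reVal χ p * primeSum (reVal χ) s) * (p : ℝ) ^ (-s))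
      (∑ χ ∈ quadChars q, primeSum (reVal χ) s ^ 2) := by
    simp only [sq (primeSum _ s)]
    refine (hasSum_sum fun χ _ ↦ (summable_mul_primes_rpow (abs_reVal_le_one χ) hs).hasSum.mul_right
      (primeSum (reVal χ) s)).congr_fun fun p ↦ ?_
    rw [Finset.sum_mul]
    exact Finset.sum_congr rfl fun χ _ ↦ mul_right_comm _ _ _
  rw [primeSum_one]
  refine hasSum_le (fun p ↦ ?_) hsq ((summable_primes_rpow hs).hasSum.mul_left _)
  exact mul_le_mul_of_nonneg_right (sum_reVal_mul_primeSum_le_of_dvd hP hs p)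
    (primes_rpow_nonneg p _)

end QuadChars

lemma unitsMap_intCast_injective {n : ℕ} (hn : 2 < n) :
    Function.Injective (Units.map (Int.castRingHom (ZMod n) : ℤ →* ZMod n)) := by
  have : Fact (2 < n) := ⟨hn⟩
  rw [injective_iff_map_eq_one]
  intro u hu
  refine (Int.units_eq_one_or u).resolve_right fun hneg ↦ ZMod.neg_one_ne_one (n := n) ?_
  simpa [hneg, Units.ext_iff] using hu

/-- Independent choices of sign modulo the coprime factors `a i` give `2 ^ ω` square roots of `1`
in the unit group, which is isomorphic to the group of characters. -/
lemma two_pow_card_le_card_quadChars {ι : Type*} [Fintype ι] {a : ι → ℕ}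
    (hcop : Pairwise (Function.onFun Nat.Coprime a)) (ha : ∀ i, 2 < a i) [NeZero (∏ i, a i)] :
    2 ^ Fintype.card ι ≤ (quadChars (∏ i, a i)).card := by
  classical
  obtain ⟨e⟩ := DirichletCharacter.mulEquiv_units ℂ (∏ i, a i)
  let φ : (∀ i, (ZMod (a i))ˣ) ≃* DirichletCharacter ℂ (∏ i, a i) :=
    (MulEquiv.piUnits.symm.trans (Units.mapEquiv (ZMod.prodEquivPi a hcop).symm)).trans e.symm
  let signs (b : ι → ℤˣ) (i : ι) : (ZMod (a i))ˣ :=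
    Units.map (Int.castRingHom (ZMod (a i)) : ℤ →* ZMod (a i)) (b i)
  have hsigns : Function.Injective signs :=
    Function.Injective.piMap fun i ↦ unitsMap_intCast_injective (ha i)
  have hsq (b : ι → ℤˣ) : φ (signs b) ^ 2 = 1 := by
    have : signs b ^ 2 = 1 := funext fun i ↦ by
      rw [Pi.pow_apply, ← map_pow, Int.units_sq, map_one, Pi.one_apply]
    rw [← map_pow, this, map_one]
  calc 2 ^ Fintype.card ι = (Finset.univ : Finset (ι → ℤˣ)).card := by
        rw [Finset.card_univ, Fintype.card_fun, Fintype.card_units_int]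
    _ ≤ (quadChars (∏ i, a i)).card :=
        Finset.card_le_card_of_injOn (fun b ↦ φ (signs b)) (fun b _ ↦ mem_quadChars.2 (hsq b))
          (φ.injective.comp hsigns).injOn

/-! ### The second moment -/

lemma LFunction_one_re {q : ℕ} [NeZero q] {χ : DirichletCharacter ℂ q} (h2 : χ ^ 2 = 1)
    (h1 : χ ≠ 1) : (χ.LFunction 1).re = ‖χ.LFunction 1‖ := by
  obtain ⟨lam, G, h, hid⟩ := exists_harnackProfile h2 h1 (le_max_left (16 : ℝ) q) (le_max_right _ _)
  have hone := hid 0 (by norm_num)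
  rw [scalePt_zero, Complex.ofReal_one, regZetaGamma_one, one_mul] at hone
  rw [hone, Complex.norm_real, Complex.ofReal_re,
    Real.norm_of_nonneg (h.profile_pos (by norm_num)).le]

open Classical in
/-- The characters in `quadChars q` for which `IsAdmissible` gives no control on `log L(1, χ)`: the
principal one and those with a zero within `c / log Q` of `1`. -/
def badChars (q : ℕ) [NeZero q] (c Q : ℝ) : Finset (DirichletCharacter ℂ q) :=
  {χ ∈ quadChars q | χ = 1 ∨ HasExceptionalZero c Q χ}

open Classical in
/-- The quadratic characters modulo `q` without a zero within `c / log Q` of `1`; the set `V` of the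
theorem when `Q = q = |D|`. -/
def goodChars (q : ℕ) [NeZero q] (c Q : ℝ) : Finset (DirichletCharacter ℂ q) :=
  quadChars q \ badChars q c Q

section Moment

variable {q : ℕ} [NeZero q] {χ : DirichletCharacter ℂ q} {c K Q : ℝ}

lemma mem_goodChars :
    χ ∈ goodChars q c Q ↔ χ ^ 2 = 1 ∧ χ ≠ 1 ∧ ¬ HasExceptionalZero c Q χ := by
  simp only [goodChars, badChars, Finset.mem_sdiff, Finset.mem_filter, mem_quadChars]
  tauto

lemma goodChars_subset : goodChars q c Q ⊆ quadChars q := by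
  classical exact Finset.sdiff_subset

namespace IsAdmissible

lemma card_badChars_le (h : IsAdmissible c K)
    (hQ : 16 ≤ Q) (hq : q ≤ Q) : (badChars q c Q).card ≤ 2 := by
  classical
  have hone : ((badChars q c Q).erase 1).card ≤ 1 := by
    refine Finset.card_le_one.2 fun χ₁ h₁ χ₂ h₂ ↦ ?_
    simp only [badChars, Finset.mem_erase, Finset.mem_filter, mem_quadChars] at h₁ h₂
    exact h.eq_of_exceptional h₁.2.1 h₁.1 h₂.2.1 h₂.1 hQ hq (h₁.2.2.resolve_left h₁.1)
      (h₂.2.2.resolve_left h₂.1)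
  have := Finset.pred_card_le_card_erase (s := badChars q c Q) (a := 1)
  lia

lemma card_quadChars_le (h : IsAdmissible c K)
    (hQ : 16 ≤ Q) (hq : q ≤ Q) (hne : (goodChars q c Q).Nonempty) :
    (quadChars q).card ≤ 3 * (goodChars q c Q).card := by
  classical
  have hsub := Finset.le_card_sdiff (badChars q c Q) (quadChars q)
  have := h.card_badChars_le hQ hq
  have := hne.card_pos
  rw [← goodChars] at hsub
  lia

lemma log_sq_le (h : IsAdmissible c K) (hQ : 16 ≤ Q) (hq : q ≤ Q) (hχ : χ ∈ goodChars q c Q) :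
    Real.log (χ.LFunction 1).re ^ 2 ≤
      2 * primeSum (reVal χ) (scalePt Q 1) ^ 2 + 2 * K ^ 2 := by
  obtain ⟨h2, h1, hex⟩ := mem_goodChars.1 hχ
  rw [LFunction_one_re h2 h1]
  set ℓ := Real.log ‖χ.LFunction 1‖
  set σ := primeSum (reVal χ) (scalePt Q 1)
  have hdiff : (ℓ - σ) ^ 2 ≤ K ^ 2 :=
    sq_le_sq' (by linarith [h.primeSum_le_log_norm h2 h1 hQ hq hex])
      (by linarith [h.log_norm_le h2 h1 hQ hq])
  linarith [sq_nonneg (ℓ - 2 * σ)]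

lemma abs_primeSum_le_of_mem_goodChars (h : IsAdmissible c K)
    {Q' : ℝ} (hQ' : 16 ≤ Q') (hq : q ≤ Q') (hQ : Q' ≤ Q)
    (hχ : χ ∈ goodChars q c Q') :
    |primeSum (reVal χ) (scalePt Q 1)| ≤ primeSum 1 (scalePt Q' 1) + 2 * K := by
  obtain ⟨h2, h1, hex⟩ := mem_goodChars.1 hχ
  have hlog : 0 < Real.log Q' := by linarith [two_lt_log hQ']
  have hlogQ : Real.log Q' ≤ Real.log Q := Real.log_le_log (by linarith) hQ
  have hscale : scalePt Q' (Real.log Q' / Real.log Q) = scalePt Q 1 := by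
    rw [scalePt, scalePt, div_right_comm, div_self hlog.ne']
  have hupper := h.primeSum_le h2 h1 hQ' hq (Real.log Q' / Real.log Q)
    ⟨div_pos hlog (hlog.trans_le hlogQ), div_le_one_of_le₀ hlogQ (hlog.trans_le hlogQ).le⟩
  have hlower := h.log_norm_le h2 h1 (hQ'.trans hQ) (hq.trans hQ)
  have hgood := h.primeSum_le_log_norm h2 h1 hQ' hq hex
  have habs := abs_le.1 (abs_primeSum_le (abs_reVal_le_one χ)
    (one_lt_scalePt (η := 1) hQ' (by norm_num)))
  rw [hscale] at hupper
  rw [abs_le]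
  constructor <;> linarith [habs.1, habs.2, h.nonneg]

lemma sum_abs_primeSum_le (h : IsAdmissible c K)
    {Q' : ℝ} (hQ' : 16 ≤ Q') (hq : q ≤ Q') (hQ : Q' ≤ Q) :
    ∑ χ ∈ quadChars q, |primeSum (reVal χ) (scalePt Q 1)| ≤
      (quadChars q).card * (primeSum 1 (scalePt Q' 1) + 2 * K) +
        2 * primeSum 1 (scalePt Q 1) := by
  classical
  have hgood : ∑ χ ∈ goodChars q c Q', |primeSum (reVal χ) (scalePt Q 1)| ≤
      (quadChars q).card * (primeSum 1 (scalePt Q' 1) + 2 * K) := by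
    refine (Finset.sum_le_card_nsmul _ _ _ fun χ hχ ↦
      h.abs_primeSum_le_of_mem_goodChars hQ' hq hQ hχ).trans ?_
    rw [nsmul_eq_mul]
    have := primeSum_one_nonneg (scalePt Q' 1)
    have := h.nonneg
    gcongr
    exact goodChars_subset
  have hbad : ∑ χ ∈ badChars q c Q', |primeSum (reVal χ) (scalePt Q 1)| ≤
      2 * primeSum 1 (scalePt Q 1) := by
    refine (Finset.sum_le_card_nsmul _ _ _ fun χ _ ↦ abs_primeSum_le (abs_reVal_le_one χ)
      (one_lt_scalePt (η := 1) (hQ'.trans hQ) (by norm_num))).trans ?_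
    rw [nsmul_eq_mul]
    exact mul_le_mul_of_nonneg_right (by exact_mod_cast h.card_badChars_le hQ' hq)
      (primeSum_one_nonneg _)
  rw [← Finset.sum_sdiff (show badChars q c Q' ⊆ quadChars q from Finset.filter_subset _ _)]
  exact add_le_add hgood hbad

lemma sum_sq_primeSum_le (h : IsAdmissible c K)
    {P : ℕ} [NeZero P] (hP : P ∣ q) {Q' : ℝ} (hQ' : 16 ≤ Q') (hPQ : P ≤ Q')
    (hQ : Q' ≤ Q) :
    ∑ χ ∈ quadChars q, primeSum (reVal χ) (scalePt Q 1) ^ 2 ≤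
      (quadChars q).card * ((primeSum 1 (scalePt Q' 1) + 2 * K +
        2 * primeSum 1 (scalePt Q 1) / (quadChars P).card) * primeSum 1 (scalePt Q 1)) := by
  have hcard := card_quadChars_pos P
  have hprime := primeSum_one_nonneg (scalePt Q 1)
  calc ∑ χ ∈ quadChars q, primeSum (reVal χ) (scalePt Q 1) ^ 2
      ≤ (quadChars q).card / (quadChars P).card *
        (∑ ψ ∈ quadChars P, |primeSum (reVal ψ) (scalePt Q 1)|) * primeSum 1 (scalePt Q 1) :=
        sum_sq_primeSum_le_of_dvd hP (one_lt_scalePt (hQ'.trans hQ) (by norm_num))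
    _ ≤ (quadChars q).card / (quadChars P).card * ((quadChars P).card *
        (primeSum 1 (scalePt Q' 1) + 2 * K) + 2 * primeSum 1 (scalePt Q 1)) *
          primeSum 1 (scalePt Q 1) := by
      gcongr
      exact h.sum_abs_primeSum_le hQ' hPQ hQ
    _ = _ := by field_simp

lemma sum_log_sq_le_of_dvd (h : IsAdmissible c K)
    {P : ℕ} [NeZero P] (hP : P ∣ q) {Q' : ℝ} (hQ' : 16 ≤ Q') (hPQ : P ≤ Q')
    (hQ : Q' ≤ Q) (hq : q ≤ Q) :
    ∑ χ ∈ goodChars q c Q, Real.log (χ.LFunction 1).re ^ 2 ≤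
      (goodChars q c Q).card * (6 * ((primeSum 1 (scalePt Q' 1) + 2 * K +
        2 * primeSum 1 (scalePt Q 1) / (quadChars P).card) * primeSum 1 (scalePt Q 1)) +
          2 * K ^ 2) := by
  rcases (goodChars q c Q).eq_empty_or_nonempty with hempty | hne
  · simp [hempty]
  set M := (primeSum 1 (scalePt Q' 1) + 2 * K + 2 * primeSum 1 (scalePt Q 1) /
    (quadChars P).card) * primeSum 1 (scalePt Q 1)
  have hM : 0 ≤ M := by
    have := primeSum_one_nonneg (scalePt Q' 1)
    have := primeSum_one_nonneg (scalePt Q 1)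
    have := h.nonneg
    positivity
  have hcard : ((quadChars q).card : ℝ) ≤ 3 * (goodChars q c Q).card := by
    exact_mod_cast h.card_quadChars_le (hQ'.trans hQ) hq hne
  calc ∑ χ ∈ goodChars q c Q, Real.log (χ.LFunction 1).re ^ 2
      ≤ ∑ χ ∈ goodChars q c Q, (2 * primeSum (reVal χ) (scalePt Q 1) ^ 2 + 2 * K ^ 2) :=
        Finset.sum_le_sum fun χ hχ ↦ h.log_sq_le (hQ'.trans hQ) hq hχ
    _ = 2 * ∑ χ ∈ goodChars q c Q, primeSum (reVal χ) (scalePt Q 1) ^ 2 +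
          (goodChars q c Q).card * (2 * K ^ 2) := by
        rw [Finset.sum_add_distrib, ← Finset.mul_sum, Finset.sum_const, nsmul_eq_mul]
    _ ≤ 2 * ∑ χ ∈ quadChars q, primeSum (reVal χ) (scalePt Q 1) ^ 2 +
          (goodChars q c Q).card * (2 * K ^ 2) := by
        gcongr
        exact goodChars_subset
    _ ≤ 2 * (3 * (goodChars q c Q).card * M) + (goodChars q c Q).card * (2 * K ^ 2) := by
        gcongr
        exact (h.sum_sq_primeSum_le hP hQ' hPQ hQ).trans (by gcongr)
    _ = (goodChars q c Q).card * (6 * M + 2 * K ^ 2) := by ring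

end IsAdmissible

end Moment

/-! ### The modulus built from the small primes -/

/-- The primes `p ≤ Y` dividing `n`, whose number is `ω_Y(n)`. -/
def smallPrimes (Y : ℝ) (n : ℕ) : Finset ℕ := {p ∈ n.primeFactors | (p : ℝ) ≤ Y}

lemma card_smallPrimes_natAbs (Y : ℝ) {D : ℤ} (hD : D ≠ 0) :
    (smallPrimes Y D.natAbs).card = omegaY Y D := by
  refine (Nat.subtype_card _ fun p ↦ ?_).symm
  simp only [smallPrimes, Finset.mem_filter, Nat.mem_primeFactors, Int.natCast_dvd,
    Int.natAbs_ne_zero]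
  tauto

lemma log_prod_le {S : Finset ℕ} {Y : ℝ} (hS : ∀ p ∈ S, p ≠ 0 ∧ (p : ℝ) ≤ Y) :
    Real.log (∏ p ∈ S, p : ℕ) ≤ S.card * Real.log Y := by
  rw [Nat.cast_prod, Real.log_prod fun p hp ↦ Nat.cast_ne_zero.2 (hS p hp).1, ← nsmul_eq_mul]
  exact Finset.sum_le_card_nsmul _ _ _ fun p hp ↦
    Real.log_le_log (Nat.cast_pos.2 (Nat.pos_of_ne_zero (hS p hp).1)) (hS p hp).2

/-- `P` is the product of the odd primes in `smallPrimes Y n`. -/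
lemma exists_dvd_two_pow_card_le (n : ℕ) {Y : ℝ} (hY : 1 ≤ Y) :
    ∃ (P : ℕ) (_ : NeZero P), P ∣ n ∧ Real.log P ≤ (smallPrimes Y n).card * Real.log Y ∧
      2 ^ (smallPrimes Y n).card ≤ 2 * (quadChars P).card := by
  set S := (smallPrimes Y n).erase 2
  have hS (p : ℕ) (hp : p ∈ S) : p ≠ 2 ∧ p.Prime ∧ p ∣ n ∧ (p : ℝ) ≤ Y := by
    have hp' := Finset.mem_filter.1 (Finset.mem_of_mem_erase hp)
    exact ⟨Finset.ne_of_mem_erase hp, Nat.prime_of_mem_primeFactors hp'.1,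
      Nat.dvd_of_mem_primeFactors hp'.1, hp'.2⟩
  have hprod : ∏ p : S, (p : ℕ) = ∏ p ∈ S, p := Finset.prod_coe_sort S id
  have hne : NeZero (∏ p : S, (p : ℕ)) :=
    ⟨Finset.prod_ne_zero_iff.2 fun p _ ↦ (hS p p.2).2.1.ne_zero⟩
  refine ⟨∏ p : S, (p : ℕ), hne, ?_, ?_, ?_⟩
  · rw [hprod]
    exact Finset.prod_primes_dvd n (fun p hp ↦ (hS p hp).2.1.prime) fun p hp ↦ (hS p hp).2.2.1
  · rw [hprod]
    refine (log_prod_le fun p hp ↦ ⟨(hS p hp).2.1.ne_zero, (hS p hp).2.2.2⟩).trans ?_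
    have := Real.log_nonneg hY
    gcongr
    exact Finset.erase_subset _ _
  · have hcop : Pairwise (Function.onFun Nat.Coprime fun p : S ↦ (p : ℕ)) := fun p p' hpp' ↦
      (Nat.coprime_primes (hS p p.2).2.1 (hS p' p'.2).2.1).2 (Subtype.coe_ne_coe.2 hpp')
    have hquad := two_pow_card_le_card_quadChars hcop fun p ↦
      (hS p p.2).2.1.two_le.lt_of_ne' (hS p p.2).1
    rw [Fintype.card_coe] at hquad
    calc 2 ^ (smallPrimes Y n).card ≤ 2 ^ (S.card + 1) := by
          gcongr
          · norm_num
          · have := Finset.pred_card_le_card_erase (s := smallPrimes Y n) (a := 2)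
            lia
      _ = 2 * 2 ^ S.card := pow_succ' _ _
      _ ≤ _ := by gcongr

/-! ### The bound in terms of `ω_Y` -/

lemma one_le_log_of_three_le {Y : ℝ} (hY : 3 ≤ Y) : 1 ≤ Real.log Y := by
  rw [Real.le_log_iff_exp_le (by linarith)]
  linarith [Real.exp_one_lt_d9]

lemma log_log_max_sixteen_le {P w : ℕ} {Y : ℝ} (hY : 3 ≤ Y) (hP : Real.log P ≤ w * Real.log Y) :
    Real.log (Real.log (max (16 : ℝ) P)) ≤ 2 + (Real.log (w + 2) + Real.log (Real.log Y)) := by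
  have hlogY := one_le_log_of_three_le hY
  have hlog16 : Real.log 16 < 2.8 := by
    rw [show (16 : ℝ) = 2 ^ 4 by norm_num, Real.log_pow]
    push_cast
    linarith [Real.log_two_lt_d9]
  have hlog : Real.log (max (16 : ℝ) P) ≤ 3 * ((w + 2) * Real.log Y) := by
    rcases max_choice (16 : ℝ) P with h | h <;> rw [h] <;> nlinarith [w.cast_nonneg (α := ℝ)]
  have hlog3 : Real.log 3 ≤ 3 - 1 := Real.log_le_sub_one_of_pos (by norm_num)
  have hpos : 0 < Real.log (max (16 : ℝ) P) := by linarith [two_lt_log (le_max_left (16 : ℝ) P)]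
  refine (Real.log_le_log hpos hlog).trans ?_
  rw [Real.log_mul three_ne_zero (by positivity), Real.log_mul (by positivity) (by positivity)]
  linarith

/-- The constant `C` of the theorem, in terms of the constant `K` of `IsAdmissible`. -/
def momentConst (K : ℝ) : ℝ := 6 * (1 + 2 * K) * (5 + 8 * K) + 8 * K ^ 2

lemma moment_bound_le {K X W A B N y : ℝ} (hK : 0 ≤ K) (hX : 1 / 2 ≤ X) (hW : 1 / 2 ≤ W)
    (hA : A ≤ 2 + W + K) (hB : 0 ≤ B) (hBX : B ≤ X + K) (hy : 0 < y) (hN : y ≤ 2 * N) :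
    6 * ((A + 2 * K + 2 * B / N) * B) + 2 * K ^ 2 ≤ momentConst K * (X * W + X ^ 2 / y) := by
  have hXK : X + K ≤ (1 + 2 * K) * X := by nlinarith
  have hmean : A + 2 * K + 2 * B / N ≤ (5 + 8 * K) * (W + X / y) := by
    have hWK : 2 + W + 3 * K ≤ (5 + 8 * K) * W := by nlinarith
    have hdiv : 2 * B / N ≤ 4 * (1 + 2 * K) * (X / y) :=
      calc 2 * B / N = 4 * B / (2 * N) := by
            field_simp
            ring
        _ ≤ 4 * ((1 + 2 * K) * X) / y := by
            gcongr
            exact hBX.trans hXK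
        _ = 4 * (1 + 2 * K) * (X / y) := by ring
    have : 0 ≤ X / y := by positivity
    nlinarith
  have hmain : 1 / 4 ≤ X * W + X ^ 2 / y := by
    have : 0 ≤ X ^ 2 / y := by positivity
    nlinarith
  calc 6 * ((A + 2 * K + 2 * B / N) * B) + 2 * K ^ 2
      ≤ 6 * ((5 + 8 * K) * (W + X / y) * ((1 + 2 * K) * X)) +
          8 * K ^ 2 * (X * W + X ^ 2 / y) := by
        gcongr ?_ + ?_
        · gcongr
          exact hBX.trans hXK
        · nlinarith [sq_nonneg K]
    _ = momentConst K * (X * W + X ^ 2 / y) := by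
        rw [momentConst]
        ring

lemma IsAdmissible.sum_log_sq_le {c K : ℝ} (h : IsAdmissible c K) {q : ℕ} [NeZero q]
    (hq : (16 : ℝ) ≤ q) {Y : ℝ} (hY : 3 ≤ Y) :
    ∑ χ ∈ goodChars q c q, Real.log (χ.LFunction 1).re ^ 2 ≤
      momentConst K * (goodChars q c q).card * (Real.log (Real.log q) *
        (Real.log ((smallPrimes Y q).card + 2) + Real.log (Real.log Y)) +
          Real.log (Real.log q) ^ 2 / 2 ^ (smallPrimes Y q).card) := by
  obtain ⟨P, _, hP, hlogP, hquad⟩ := exists_dvd_two_pow_card_le q (Y := Y) (by linarith)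
  have hPq : (P : ℝ) ≤ q := by exact_mod_cast Nat.le_of_dvd (Nat.pos_of_neZero q) hP
  have hmax : (16 : ℝ) ≤ max (16 : ℝ) P := le_max_left _ _
  have hlog2 : 1 / 2 ≤ Real.log 2 := by linarith [Real.log_two_gt_d9]
  have hX : 1 / 2 ≤ Real.log (Real.log q) :=
    hlog2.trans (Real.log_le_log two_pos (two_lt_log hq).le)
  have hW : 1 / 2 ≤ Real.log ((smallPrimes Y q).card + 2) + Real.log (Real.log Y) :=
    le_add_of_le_of_nonneg (hlog2.trans (Real.log_le_log two_pos (by simp)))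
      (Real.log_nonneg (one_le_log_of_three_le hY))
  have hA := (h.primeSum_one_le _ hmax).trans
    (add_le_add_left (log_log_max_sixteen_le hY hlogP) K)
  refine (h.sum_log_sq_le_of_dvd hP hmax (le_max_right _ _) (max_le hq hPq) le_rfl).trans ?_
  rw [mul_comm (momentConst K), mul_assoc]
  gcongr
  exact moment_bound_le h.nonneg hX hW hA (primeSum_one_nonneg _) (h.primeSum_one_le q hq)
    (by positivity) (by exact_mod_cast hquad)

end QuadraticMoment

open QuadraticMoment in
theorem statement_7_general :
    ∃ c C : ℝ, 0 < c ∧ 0 < C ∧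
      ∀ (D : ℤ) [NeZero D.natAbs], 16 ≤ |D| →
        ∀ Y : ℝ, 3 ≤ Y →
          ∀ V : Finset (DirichletCharacter ℂ D.natAbs),
            (∀ χ, χ ∈ V ↔ χ ^ 2 = 1 ∧ χ ≠ 1 ∧
              ¬∃ β : ℝ, χ.LFunction β = 0 ∧ 1 - c / Real.log |(D : ℝ)| < β) →
            ∑ χ ∈ V, Real.log (χ.LFunction 1).re ^ 2 ≤
              C * V.card * (Real.log (Real.log |(D : ℝ)|) *
                  (Real.log ((omegaY Y D : ℝ) + 2) + Real.log (Real.log Y)) +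
                Real.log (Real.log |(D : ℝ)|) ^ 2 / 2 ^ omegaY Y D) := by
  obtain ⟨c, K, h⟩ := exists_isAdmissible
  have hK := h.nonneg
  refine ⟨c, momentConst K, h.pos, by unfold momentConst; positivity, fun D _ hD Y hY V hV ↦ ?_⟩
  have habs : |(D : ℝ)| = D.natAbs := by rw [Nat.cast_natAbs, Int.cast_abs]
  have hq : (16 : ℝ) ≤ D.natAbs := by
    rw [← habs, ← Int.cast_abs]
    exact_mod_cast hD
  have hV' : V = goodChars D.natAbs c D.natAbs := by
    ext χ
    rw [hV, habs, mem_goodChars, HasExceptionalZero]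
  rw [hV', habs, ← card_smallPrimes_natAbs Y (Int.natAbs_ne_zero.1 (NeZero.ne _))]
  exact h.sum_log_sq_le hq hY

/-- Second-moment bound: there are absolute constants `c, C > 0` such that for every fundamental
discriminant `D` with `|D| ≥ 16` and every `3 ≤ Y < |D|`, with `V` the set of quadratic Dirichlet
characters mod `|D|` whose `L`-function has no real zero `β > 1 - c/log |D|`,
`∑_{χ ∈ V} (log L(1,χ))² ≤ C·#V·[(log log |D|)(log(ω_Y(D)+2) + log log Y) + (log log |D|)²/2^{ω_Y(D)}]`. -/
theorem statement_7 :
    ∃ c C : ℝ, 0 < c ∧ 0 < C ∧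
      ∀ (D : ℤ) [NeZero D.natAbs], IsFundDiscr D → 16 ≤ |D| →
        ∀ Y : ℝ, 3 ≤ Y → Y < |(D : ℝ)| →
          ∀ V : Finset (DirichletCharacter ℂ D.natAbs),
            (∀ χ, χ ∈ V ↔ χ ^ 2 = 1 ∧ χ ≠ 1 ∧
              ¬∃ β : ℝ, χ.LFunction β = 0 ∧ 1 - c / Real.log |(D : ℝ)| < β) →
            ∑ χ ∈ V, Real.log (χ.LFunction 1).re ^ 2 ≤
              C * V.card * (Real.log (Real.log |(D : ℝ)|) *
                  (Real.log ((omegaY Y D : ℝ) + 2) + Real.log (Real.log Y)) +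
                Real.log (Real.log |(D : ℝ)|) ^ 2 / 2 ^ omegaY Y D) := by
  obtain ⟨c, C, hc, hC, h⟩ := statement_7_general
  exact ⟨c, C, hc, hC, fun D _ _ hD Y hY _ V hV ↦ h D hD Y hY V hV⟩
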